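/- arXiv:2006.10129 — 9 statements merged into one kernel-verified Lean document; each statement's English description precedes it below -/
import Mathlib

section
/- Let (Ω, ℱ, P) be a probability space with a filtration 𝒢_0 ⊆ 𝒢_1 ⊆ … ⊆ 𝒢_T, let p ∈ [0,1], and let X_1, …, X_T : Ω → {0,1} be random variables such that X_t is 𝒢_t-measurable and E[X_t ∣ 𝒢_{t−1}] ≤ p almost surely for every t ∈ {1,…,T}. Then for every integer k ≥ 0, P(Σ_{t=1}^T X_t ≥ k) ≤ Σ_{j=k}^T C(T, j) p^j (1 − p)^{T − j}, where C(T, j) is the binomial coefficient. -/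
open MeasureTheory

lemma bt_zero (p : ℝ) (T : ℕ) :
    ∑ j ∈ Finset.Icc 0 T, (T.choose j : ℝ) * p ^ j * (1 - p) ^ (T - j) = 1 := by
  have h := add_pow p (1 - p) T
  rw [add_sub_cancel, one_pow, Finset.range_eq_Ico] at h
  refine Eq.trans ?_ h.symm
  refine Finset.sum_congr ?_ fun j _ => by ring
  ext j; simp

lemma bt_succ (p : ℝ) (T k : ℕ) :
    ∑ j ∈ Finset.Icc (k + 1) (T + 1), ((T + 1).choose j : ℝ) * p ^ j * (1 - p) ^ (T + 1 - j)
      = (1 - p) * ∑ j ∈ Finset.Icc (k + 1) T, (T.choose j : ℝ) * p ^ j * (1 - p) ^ (T - j)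
        + p * ∑ j ∈ Finset.Icc k T, (T.choose j : ℝ) * p ^ j * (1 - p) ^ (T - j) := by
  have hext : ∑ j ∈ Finset.Icc (k + 1) T, (T.choose j : ℝ) * p ^ j * (1 - p) ^ (T - j)
      = ∑ j ∈ Finset.Icc (k + 1) (T + 1), (T.choose j : ℝ) * p ^ j * (1 - p) ^ (T - j) := by
    apply Finset.sum_subset
    · intro j; simp; omega
    · intro j h1 h2
      have : T < j := by simp at h1 h2; omega
      simp [Nat.choose_eq_zero_of_lt this]
  have hsh : ∀ f : ℕ → ℝ, ∑ j ∈ Finset.Icc (k + 1) (T + 1), f j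
      = ∑ j ∈ Finset.Icc k T, f (j + 1) := by
    intro f
    rw [← Finset.map_add_right_Icc k T 1, Finset.sum_map]
    rfl
  rw [hext, hsh, hsh, Finset.mul_sum, Finset.mul_sum, ← Finset.sum_add_distrib]
  refine Finset.sum_congr rfl fun j hj => ?_
  have hj : j ≤ T := (Finset.mem_Icc.1 hj).2
  rw [Nat.choose_succ_succ, Nat.add_sub_add_right]
  rcases hj.eq_or_lt with rfl | h
  · simp; ring
  · have : T - j = (T - (j + 1)) + 1 := by omega
    rw [this]; push_cast; ring

/-- **Binomial tail domination for adapted {0,1} processes.**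
If `X_t` is `𝒢_t`-measurable, `{0,1}`-valued, and `E[X_t ∣ 𝒢_{t-1}] ≤ p` a.s. for
`t = 1, …, T`, then `P(Σ X_t ≥ k) ≤ Σ_{j=k}^T C(T,j) p^j (1-p)^{T-j}`. -/
theorem binomial_tail_domination
    {Ω : Type*} {mΩ : MeasurableSpace Ω} (P : Measure Ω) [IsProbabilityMeasure P]
    (T : ℕ) (𝒢 : ℕ → MeasurableSpace Ω)
    (hmono : ∀ i j, i ≤ j → 𝒢 i ≤ 𝒢 j)
    (hle : ∀ i, 𝒢 i ≤ mΩ)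
    (p : ℝ) (hp0 : 0 ≤ p) (hp1 : p ≤ 1)
    (X : ℕ → Ω → ℝ)
    (hval : ∀ t ∈ Finset.Icc 1 T, ∀ ω, X t ω = 0 ∨ X t ω = 1)
    (hmeas : ∀ t ∈ Finset.Icc 1 T, Measurable[𝒢 t] (X t))
    (hcond : ∀ t ∈ Finset.Icc 1 T, P[X t | 𝒢 (t - 1)] ≤ᵐ[P] fun _ => p)
    (k : ℕ) :
    (P {ω | (k : ℝ) ≤ ∑ t ∈ Finset.Icc 1 T, X t ω}).toReal
      ≤ ∑ j ∈ Finset.Icc k T, (T.choose j : ℝ) * p ^ j * (1 - p) ^ (T - j) := by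
  induction T generalizing k with
  | zero =>
    rcases k with _ | k
    · simp
    · have : {ω : Ω | ((k + 1 : ℕ) : ℝ) ≤ ∑ t ∈ Finset.Icc 1 0, X t ω} = ∅ := by
        ext ω
        simp
        positivity
      rw [this]; simp
  | succ T ih =>
    rcases k with _ | k
    · rw [bt_zero]
      exact measureReal_le_one
    have hsub : ∀ t ∈ Finset.Icc 1 T, t ∈ Finset.Icc 1 (T + 1) := by
      intro t; simp; omega
    have ih := ih (fun t ht => hval t (hsub t ht)) (fun t ht => hmeas t (hsub t ht))
      (fun t ht => hcond t (hsub t ht))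
    have hT : T + 1 ∈ Finset.Icc 1 (T + 1) := by simp
    have hS : Measurable[𝒢 T] (fun ω => ∑ t ∈ Finset.Icc 1 T, X t ω) := by
      refine @Finset.measurable_fun_sum _ _ _ _ _ _ (𝒢 T) _ _ fun t ht => ?_
      exact (hmeas t (hsub t ht)).mono (hmono _ _ (Finset.mem_Icc.1 ht).2) le_rfl
    have hE : ∀ c : ℝ, MeasurableSet[𝒢 T] {ω | c ≤ ∑ t ∈ Finset.Icc 1 T, X t ω} :=
      fun c => hS measurableSet_Ici
    set S : Ω → ℝ := fun ω => ∑ t ∈ Finset.Icc 1 T, X t ω with hSdef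
    set A : Set Ω := {ω | (k : ℝ) ≤ S ω} with hA
    set B : Set Ω := {ω | ((k + 1 : ℕ) : ℝ) ≤ S ω} with hB
    have hBA : B ⊆ A := by
      intro ω h
      simp only [hA, hB, Set.mem_setOf_eq] at h ⊢
      push_cast at h; linarith
    have hD : MeasurableSet[𝒢 T] (A \ B) := (hE _).diff (hE _)
    have hXm : Measurable (X (T + 1)) := (hmeas _ hT).mono (hle _) le_rfl
    have hXi : Integrable (X (T + 1)) P := by
      refine Integrable.of_bound hXm.aestronglyMeasurable 1 (ae_of_all _ fun ω => ?_)
      rcases hval _ hT ω with h | h <;> simp [h]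
    set C : Set Ω := {ω | X (T + 1) ω = 1} with hC
    have hCm : MeasurableSet C := hXm (measurableSet_singleton 1)
    have hXC : X (T + 1) = C.indicator 1 := by
      ext ω
      rcases hval _ hT ω with h | h <;> simp [hC, Set.indicator, h]
    have h1 : P.real (C ∩ (A \ B)) ≤ p * P.real (A \ B) := by
      have e1 : ∫ ω in A \ B, X (T + 1) ω ∂P = P.real (C ∩ (A \ B)) := by
        rw [hXC, integral_indicator_one hCm, measureReal_restrict_apply hCm]
      rw [← e1, ← setIntegral_condExp (hle T) hXi hD]
      calc _ ≤ ∫ ω in A \ B, p ∂P := by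
            refine setIntegral_mono_ae integrable_condExp.integrableOn
              (integrable_const p).integrableOn ?_
            simpa using hcond _ hT
        _ = _ := by simp [mul_comm]
    have h2 : P.real (A \ B) = P.real A - P.real B :=
      measureReal_diff hBA (hle _ _ (hE _))
    have h3 : P.real {ω | ((k + 1 : ℕ) : ℝ) ≤ ∑ t ∈ Finset.Icc 1 (T + 1), X t ω}
        ≤ P.real B + P.real (C ∩ (A \ B)) := by
      refine (measureReal_mono ?_).trans (measureReal_union_le _ _)
      intro ω h
      by_cases hb : ω ∈ B
      · exact Or.inl hb
      right
      simp only [Set.mem_setOf_eq] at h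
      rw [Finset.sum_Icc_succ_top (by omega)] at h
      change _ ≤ S ω + _ at h
      have hb' : ¬ ((k + 1 : ℕ) : ℝ) ≤ S ω := hb
      push_cast at h hb'
      rcases hval _ hT ω with h0 | h0
      · exfalso; rw [h0] at h; linarith
      · refine ⟨h0, ?_, hb⟩
        change (k : ℝ) ≤ S ω
        rw [h0] at h; linarith
    rw [bt_succ]
    have i1 := mul_le_mul_of_nonneg_left (ih (k + 1)) (sub_nonneg.2 hp1)
    have i2 := mul_le_mul_of_nonneg_left (ih k) hp0
    change (1 - p) * P.real B ≤ _ at i1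
    change p * P.real A ≤ _ at i2
    change P.real _ ≤ _
    rw [h2] at h1
    linarith
end

section
/- Let (Ω, ℱ, P) be a probability space with a filtration 𝒢_0 ⊆ 𝒢_1 ⊆ … ⊆ 𝒢_T, let F be a finite nonempty index set, let p ∈ (0,1], and for each f ∈ F let X_1^f, …, X_T^f : Ω → {0,1} be random variables such that X_t^f is 𝒢_t-measurable and E[X_t^f ∣ 𝒢_{t−1}] ≤ p almost surely for every t and every f ∈ F. Then for every s > 0, E[max_{f ∈ F} Σ_{t=1}^T X_t^f] ≤ (ln|F| + T p (e^s − 1)) / s. -/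
open MeasureTheory

theorem mgf_aux
    {Ω : Type*} {mΩ : MeasurableSpace Ω} (P : Measure Ω) [IsProbabilityMeasure P]
    (T : ℕ) (𝒢 : ℕ → MeasurableSpace Ω)
    (hmono : ∀ i j, i ≤ j → 𝒢 i ≤ 𝒢 j)
    (hle : ∀ i, 𝒢 i ≤ mΩ)
    (p : ℝ)
    (X : ℕ → Ω → ℝ)
    (hval : ∀ t ∈ Finset.Icc 1 T, ∀ ω, X t ω = 0 ∨ X t ω = 1)
    (hmeas : ∀ t ∈ Finset.Icc 1 T, Measurable[𝒢 t] (X t))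
    (hcond : ∀ t ∈ Finset.Icc 1 T, P[X t | 𝒢 (t - 1)] ≤ᵐ[P] fun _ => p)
    (s : ℝ) (hs : 0 < s) (n : ℕ) (hn : n ≤ T) :
    Integrable (fun ω => Real.exp (s * ∑ t ∈ Finset.Icc 1 n, X t ω)) P ∧
    ∫ ω, Real.exp (s * ∑ t ∈ Finset.Icc 1 n, X t ω) ∂P
      ≤ Real.exp (n * p * (Real.exp s - 1)) := by
  induction n with
  | zero => simp
  | succ n ih =>
    obtain ⟨ihi, ihb⟩ := ih (by omega)
    have hmem : n + 1 ∈ Finset.Icc 1 T := by simp; omega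
    have hE : Measurable[𝒢 n] (fun ω => Real.exp (s * ∑ t ∈ Finset.Icc 1 n, X t ω)) := by
      refine Real.measurable_exp.comp (Measurable.const_mul ?_ s)
      refine Finset.measurable_fun_sum _ fun t ht => ?_
      have h1 := Finset.mem_Icc.1 ht
      exact (hmeas t (by simp; omega)).mono (hmono t n h1.2) le_rfl
    have hXm : Measurable (X (n+1)) := (hmeas _ hmem).mono (hle _) le_rfl
    have hXb : ∀ ω, ‖X (n+1) ω‖ ≤ 1 := fun ω => by
      rcases hval _ hmem ω with h | h <;> simp [h]
    have hXi : Integrable (X (n+1)) P :=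
      Integrable.of_bound hXm.aestronglyMeasurable 1 (Filter.Eventually.of_forall hXb)
    have hc := hcond _ hmem
    simp only [Nat.add_sub_cancel] at hc
    set E := fun ω => Real.exp (s * ∑ t ∈ Finset.Icc 1 n, X t ω) with hEdef
    have hEX : Integrable (E * X (n+1)) P :=
      ihi.mul_bdd (c := 1) hXm.aestronglyMeasurable (Filter.Eventually.of_forall hXb)
    have hpull : P[E * X (n+1) | 𝒢 n] =ᵐ[P] E * P[X (n+1) | 𝒢 n] :=
      condExp_mul_of_stronglyMeasurable_left hE.stronglyMeasurable hEX hXi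
    have hle1 : ∫ ω, (E * X (n+1)) ω ∂P ≤ p * ∫ ω, E ω ∂P := by
      rw [← integral_condExp (hle n), ← integral_const_mul]
      refine integral_mono_ae integrable_condExp (ihi.const_mul p) ?_
      filter_upwards [hpull, hc] with ω h1 h2
      rw [h1, Pi.mul_apply, mul_comm]
      exact mul_le_mul_of_nonneg_right h2 (Real.exp_pos _).le
    have heq : (fun ω => Real.exp (s * ∑ t ∈ Finset.Icc 1 (n+1), X t ω))
        = fun ω => E ω + (Real.exp s - 1) * (E * X (n+1)) ω := by
      funext ω
      rw [Finset.sum_Icc_succ_top (by omega), mul_add, Real.exp_add]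
      simp only [Pi.mul_apply, hEdef]
      rcases hval _ hmem ω with h | h <;> simp [h]
      ring
    rw [heq]
    refine ⟨ihi.add (hEX.const_mul _), ?_⟩
    rw [integral_add ihi (hEX.const_mul _), integral_const_mul]
    have hs1 : 0 ≤ Real.exp s - 1 := by linarith [Real.add_one_le_exp s]
    have hE0 : 0 ≤ ∫ ω, E ω ∂P := integral_nonneg fun ω => (Real.exp_pos _).le
    calc _ ≤ (∫ ω, E ω ∂P) + (Real.exp s - 1) * (p * ∫ ω, E ω ∂P) := by gcongr
      _ = (∫ ω, E ω ∂P) * (p * (Real.exp s - 1) + 1) := by ring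
      _ ≤ (∫ ω, E ω ∂P) * Real.exp (p * (Real.exp s - 1)) := by
        gcongr; exact Real.add_one_le_exp _
      _ ≤ Real.exp (n * p * (Real.exp s - 1)) * Real.exp (p * (Real.exp s - 1)) := by gcongr
      _ = _ := by rw [← Real.exp_add]; push_cast; ring_nf

/-- **Intermediate maximal bound in Lemma 1.**
For a finite nonempty family indexed by `F` of adapted `{0,1}`-valued processes with
conditional success probabilities at most `p`, for every `s > 0`,
`E[max_f Σ_t X_t^f] ≤ (ln |F| + T p (e^s − 1)) / s`. -/
theorem maximal_mgf_bound
    {Ω : Type*} {mΩ : MeasurableSpace Ω} (P : Measure Ω) [IsProbabilityMeasure P]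
    (T : ℕ) (𝒢 : ℕ → MeasurableSpace Ω)
    (hmono : ∀ i j, i ≤ j → 𝒢 i ≤ 𝒢 j)
    (hle : ∀ i, 𝒢 i ≤ mΩ)
    {F : Type*} [Fintype F] [Nonempty F]
    (p : ℝ) (hp0 : 0 < p) (hp1 : p ≤ 1)
    (X : F → ℕ → Ω → ℝ)
    (hval : ∀ f, ∀ t ∈ Finset.Icc 1 T, ∀ ω, X f t ω = 0 ∨ X f t ω = 1)
    (hmeas : ∀ f, ∀ t ∈ Finset.Icc 1 T, Measurable[𝒢 t] (X f t))
    (hcond : ∀ f, ∀ t ∈ Finset.Icc 1 T, P[X f t | 𝒢 (t - 1)] ≤ᵐ[P] fun _ => p)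
    (s : ℝ) (hs : 0 < s) :
    ∫ ω, (Finset.univ.sup' Finset.univ_nonempty
        fun f => ∑ t ∈ Finset.Icc 1 T, X f t ω) ∂P
      ≤ (Real.log (Fintype.card F) + T * p * (Real.exp s - 1)) / s := by
  have key := fun f => mgf_aux P T 𝒢 hmono hle p (X f) (hval f) (hmeas f) (hcond f) s hs T le_rfl
  rw [le_div_iff₀ hs, mul_comm, ← integral_const_mul]
  set a := Real.log (Fintype.card F) + T * p * (Real.exp s - 1) with ha
  have hi : Integrable (fun ω => ∑ f, Real.exp (s * ∑ t ∈ Finset.Icc 1 T, X f t ω)) P :=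
    integrable_finset_sum _ fun f _ => (key f).1
  have hS : ∫ ω, ∑ f, Real.exp (s * ∑ t ∈ Finset.Icc 1 T, X f t ω) ∂P ≤ Real.exp a := by
    rw [integral_finset_sum _ fun f _ => (key f).1]
    refine (Finset.sum_le_sum fun f _ => (key f).2).trans ?_
    rw [ha, Real.exp_add, Real.exp_log (by exact_mod_cast Fintype.card_pos)]
    simp
  calc _ ≤ ∫ ω, ((a - 1) + Real.exp (-a) *
        ∑ f, Real.exp (s * ∑ t ∈ Finset.Icc 1 T, X f t ω)) ∂P := by
        refine integral_mono_of_nonneg (Filter.Eventually.of_forall fun ω => ?_)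
          ((integrable_const _).add (hi.const_mul _)) (Filter.Eventually.of_forall fun ω => ?_)
        · obtain ⟨f, -, hf⟩ := Finset.exists_mem_eq_sup' (Finset.univ_nonempty (α := F))
            (fun f => ∑ t ∈ Finset.Icc 1 T, X f t ω)
          simp only [hf, Pi.zero_apply]
          refine mul_nonneg hs.le (Finset.sum_nonneg fun t ht => ?_)
          rcases hval f t ht ω with h | h <;> simp [h]
        · obtain ⟨f, -, hf⟩ := Finset.exists_mem_eq_sup' (Finset.univ_nonempty (α := F))
            (fun f => ∑ t ∈ Finset.Icc 1 T, X f t ω)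
          simp only [hf]
          have h1 := Finset.single_le_sum
            (f := fun f => Real.exp (s * ∑ t ∈ Finset.Icc 1 T, X f t ω))
            (fun f _ => (Real.exp_pos _).le) (Finset.mem_univ f)
          have h2 := mul_le_mul_of_nonneg_left h1 (Real.exp_pos (-a)).le
          simp only [← Real.exp_add] at h2
          have h3 := Real.add_one_le_exp (-a + s * ∑ t ∈ Finset.Icc 1 T, X f t ω)
          linarith
    _ = (a - 1) + Real.exp (-a) *
        ∫ ω, ∑ f, Real.exp (s * ∑ t ∈ Finset.Icc 1 T, X f t ω) ∂P := by
        rw [integral_add (integrable_const _) (hi.const_mul _), integral_const_mul]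
        simp
    _ ≤ (a - 1) + Real.exp (-a) * Real.exp a := by gcongr
    _ = a := by rw [← Real.exp_add]; simp
end

section
/- Let (Ω, ℱ, P) be a probability space with a filtration 𝒢_0 ⊆ 𝒢_1 ⊆ … ⊆ 𝒢_T, let F be a finite index set with ln|F| ≥ 1, let p ∈ (0,1], and for each f ∈ F let X_1^f, …, X_T^f : Ω → {0,1} be random variables such that X_t^f is 𝒢_t-measurable and E[X_t^f ∣ 𝒢_{t−1}] ≤ p almost surely for every t and every f ∈ F. If T p ≥ √(ln|F|), then E[max_{f ∈ F} Σ_{t=1}^T X_t^f] ≤ 3 T p √(ln|F|). -/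
open MeasureTheory

theorem aux_mgf
    {Ω : Type*} {mΩ : MeasurableSpace Ω} (P : Measure Ω) [IsProbabilityMeasure P]
    (T : ℕ) (𝒢 : ℕ → MeasurableSpace Ω)
    (hmono : ∀ i j, i ≤ j → 𝒢 i ≤ 𝒢 j)
    (hle : ∀ i, 𝒢 i ≤ mΩ)
    (p : ℝ) (hp0 : 0 < p)
    (X : ℕ → Ω → ℝ)
    (hval : ∀ t ∈ Finset.Icc 1 T, ∀ ω, X t ω = 0 ∨ X t ω = 1)
    (hmeas : ∀ t ∈ Finset.Icc 1 T, Measurable[𝒢 t] (X t))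
    (hcond : ∀ t ∈ Finset.Icc 1 T, P[X t | 𝒢 (t - 1)] ≤ᵐ[P] fun _ => p) :
    ∀ n, n ≤ T → Measurable[𝒢 n] (fun ω => ∑ t ∈ Finset.Icc 1 n, X t ω) ∧
      Integrable (fun ω => Real.exp (∑ t ∈ Finset.Icc 1 n, X t ω)) P ∧
      ∫ ω, Real.exp (∑ t ∈ Finset.Icc 1 n, X t ω) ∂P ≤ Real.exp (n * p * (Real.exp 1 - 1)) := by
  intro n
  induction n with
  | zero => intro _; simp
  | succ n ih =>
    intro hn
    obtain ⟨hm, hi, hb⟩ := ih (by omega)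
    have hmem : n + 1 ∈ Finset.Icc 1 T := Finset.mem_Icc.2 ⟨by omega, hn⟩
    have hX := hmeas _ hmem
    have hc := hcond _ hmem
    have hv := hval _ hmem
    simp only [Nat.add_sub_cancel] at hc
    have hXm : Measurable (X (n+1)) := hX.mono (hle _) le_rfl
    have hXi : Integrable (X (n+1)) P := by
      refine Integrable.of_bound hXm.aestronglyMeasurable 1 (Filter.Eventually.of_forall fun ω => ?_)
      rcases hv ω with h | h <;> simp [h]
    have hEm : Measurable[𝒢 n] (fun ω => Real.exp (∑ t ∈ Finset.Icc 1 n, X t ω)) :=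
      Real.measurable_exp.comp hm
    set E : Ω → ℝ := fun ω => Real.exp (∑ t ∈ Finset.Icc 1 n, X t ω) with hE
    have hEX : Integrable (E * X (n+1)) P := by
      refine hi.mono (hi.aestronglyMeasurable.mul hXm.aestronglyMeasurable)
        (Filter.Eventually.of_forall fun ω => ?_)
      rcases hv ω with h | h <;> simp [h]
    have key : (fun ω => Real.exp (∑ t ∈ Finset.Icc 1 (n+1), X t ω))
        = fun ω => E ω + (Real.exp 1 - 1) * (E * X (n+1)) ω := by
      funext ω
      rw [Finset.sum_Icc_succ_top (by omega), Real.exp_add]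
      rcases hv ω with h | h <;> simp [h, hE] <;> ring
    have hce := condExp_mul_of_stronglyMeasurable_left (μ := P) (m := 𝒢 n)
      hEm.stronglyMeasurable hEX hXi
    have hle1 : ∫ ω, (E * X (n+1)) ω ∂P ≤ p * ∫ ω, E ω ∂P := by
      rw [← integral_condExp (hle n), ← integral_const_mul]
      refine integral_mono_ae integrable_condExp (hi.const_mul p) ?_
      filter_upwards [hce, hc] with ω h1 h2
      rw [h1, Pi.mul_apply, mul_comm]
      exact mul_le_mul_of_nonneg_right h2 (Real.exp_pos _).le
    have he : 0 ≤ Real.exp 1 - 1 := by linarith [Real.add_one_le_exp (1:ℝ)]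
    refine ⟨?_, ?_, ?_⟩
    · simp_rw [Finset.sum_Icc_succ_top (show 1 ≤ n + 1 by omega)]
      exact (hm.mono (hmono n (n+1) (by omega)) le_rfl).add hX
    · rw [key]
      exact hi.add (hEX.const_mul _)
    · rw [key, integral_add hi (hEX.const_mul _), integral_const_mul]
      have h3 : (↑(n+1) : ℝ) * p * (Real.exp 1 - 1)
        = n * p * (Real.exp 1 - 1) + p * (Real.exp 1 - 1) := by push_cast; ring
      rw [h3, Real.exp_add]
      have h4 := Real.add_one_le_exp (p * (Real.exp 1 - 1))
      have h5 : 0 ≤ ∫ ω, E ω ∂P := integral_nonneg fun ω => (Real.exp_pos _).le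
      calc _ ≤ (∫ ω, E ω ∂P) + (Real.exp 1 - 1) * (p * ∫ ω, E ω ∂P) := by gcongr
        _ = (∫ ω, E ω ∂P) * (p * (Real.exp 1 - 1) + 1) := by ring
        _ ≤ _ := mul_le_mul hb h4 (by positivity) (Real.exp_pos _).le

/-- **Lemma 1 (maximal inequality for adaptive smoothed processes), explicit constant.**
For a finite family indexed by `F` with `ln |F| ≥ 1` of adapted `{0,1}`-valued processes
with conditional success probabilities at most `p`, if `T p ≥ √(ln |F|)` then
`E[max_f Σ_t X_t^f] ≤ 3 T p √(ln |F|)`. -/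
theorem maximal_inequality_adaptive
    {Ω : Type*} {mΩ : MeasurableSpace Ω} (P : Measure Ω) [IsProbabilityMeasure P]
    (T : ℕ) (𝒢 : ℕ → MeasurableSpace Ω)
    (hmono : ∀ i j, i ≤ j → 𝒢 i ≤ 𝒢 j)
    (hle : ∀ i, 𝒢 i ≤ mΩ)
    {F : Type*} [Fintype F] [Nonempty F]
    (hF : 1 ≤ Real.log (Fintype.card F))
    (p : ℝ) (hp0 : 0 < p) (hp1 : p ≤ 1)
    (X : F → ℕ → Ω → ℝ)
    (hval : ∀ f, ∀ t ∈ Finset.Icc 1 T, ∀ ω, X f t ω = 0 ∨ X f t ω = 1)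
    (hmeas : ∀ f, ∀ t ∈ Finset.Icc 1 T, Measurable[𝒢 t] (X f t))
    (hcond : ∀ f, ∀ t ∈ Finset.Icc 1 T, P[X f t | 𝒢 (t - 1)] ≤ᵐ[P] fun _ => p)
    (hTp : Real.sqrt (Real.log (Fintype.card F)) ≤ T * p) :
    ∫ ω, (Finset.univ.sup' Finset.univ_nonempty
        fun f => ∑ t ∈ Finset.Icc 1 T, X f t ω) ∂P
      ≤ 3 * T * p * Real.sqrt (Real.log (Fintype.card F)) := by
  set L := Real.log (Fintype.card F) with hL
  have H := fun f => aux_mgf P T 𝒢 hmono hle p hp0 (X f) (hval f) (hmeas f) (hcond f) T le_rfl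
  set m : ℝ := T * p with hm
  set a : ℝ := L + m * (Real.exp 1 - 1) with ha
  have hcard : (0:ℝ) < Fintype.card F := by exact_mod_cast Fintype.card_pos
  have hs1 : 1 ≤ Real.sqrt L := Real.one_le_sqrt.2 hF
  have hsq : Real.sqrt L * Real.sqrt L = L := Real.mul_self_sqrt (by linarith)
  have hfin : a ≤ 3 * T * p * Real.sqrt L := by
    have e1 := Real.exp_one_lt_d9
    have h1 : L ≤ m * Real.sqrt L := by nlinarith
    have h2 : m * 1 ≤ m * Real.sqrt L := mul_le_mul_of_nonneg_left hs1 (by linarith)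
    have h3 : m * (Real.exp 1 - 1) ≤ m * 2 := mul_le_mul_of_nonneg_left (by linarith) (by linarith)
    have h4 : 3 * T * p * Real.sqrt L = 3 * (m * Real.sqrt L) := by rw [hm]; ring
    rw [h4]; linarith
  refine le_trans ?_ hfin
  have hint : Integrable (fun ω => ∑ f, Real.exp (∑ t ∈ Finset.Icc 1 T, X f t ω)) P :=
    integrable_finset_sum _ fun f _ => (H f).2.1
  have hint2 := (hint.mul_const (Real.exp (-a))).add (integrable_const (μ := P) (a - 1))
  have hT0 : ∀ f ω, 0 ≤ ∑ t ∈ Finset.Icc 1 T, X f t ω := fun f ω =>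
    Finset.sum_nonneg fun t ht => by rcases hval f t ht ω with h | h <;> simp [h]
  refine (integral_mono_of_nonneg (Filter.Eventually.of_forall fun ω => ?_) hint2
    (Filter.Eventually.of_forall fun ω => ?_)).trans ?_
  · obtain ⟨f⟩ := ‹Nonempty F›
    exact (hT0 f ω).trans (Finset.le_sup' (fun f => ∑ t ∈ Finset.Icc 1 T, X f t ω) (Finset.mem_univ f))
  · refine Finset.sup'_le _ _ fun f _ => ?_
    have h1 := Real.add_one_le_exp ((∑ t ∈ Finset.Icc 1 T, X f t ω) - a)
    have h2 : Real.exp (∑ t ∈ Finset.Icc 1 T, X f t ω) ≤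
        ∑ f, Real.exp (∑ t ∈ Finset.Icc 1 T, X f t ω) :=
      Finset.single_le_sum (f := fun f => Real.exp (∑ t ∈ Finset.Icc 1 T, X f t ω))
        (fun _ _ => (Real.exp_pos _).le) (Finset.mem_univ f)
    have h3 := mul_le_mul_of_nonneg_right h2 (Real.exp_pos (-a)).le
    rw [← Real.exp_add, ← sub_eq_add_neg] at h3
    simp only [Pi.add_apply]
    linarith
  · have h1 : ∫ ω, ∑ f, Real.exp (∑ t ∈ Finset.Icc 1 T, X f t ω) ∂P
        ≤ Real.exp a := by
      rw [integral_finset_sum _ fun f _ => (H f).2.1]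
      calc _ ≤ ∑ f : F, Real.exp (m * (Real.exp 1 - 1)) :=
            Finset.sum_le_sum fun f _ => (H f).2.2
        _ = Real.exp a := by
            rw [ha, Real.exp_add, hL, Real.exp_log hcard]; simp
    have h2 := mul_le_mul_of_nonneg_right h1 (Real.exp_pos (-a)).le
    rw [← Real.exp_add, add_neg_cancel, Real.exp_zero] at h2
    simp only [Pi.add_apply]
    rw [integral_add (hint.mul_const _) (integrable_const _), integral_mul_const]
    simp
    linarith
end

section
/- Let X be a measurable space with measure μ, let k ≥ 1, let ε > 0, and let F_1, …, F_k be classes of measurable functions X → {0,1}. Suppose each F_i admits an ε-bracketing of size N_i with respect to μ. Then the class F_1 · F_2 ⋯ F_k = { x ↦ min(f_1(x), …, f_k(x)) : f_i ∈ F_i for each i } (pointwise intersections) admits a (kε)-bracketing of size at most N_1 · N_2 ⋯ N_k with respect to μ. -/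
open MeasureTheory

/-- `B` is an `ε`-bracketing of the class `F` of measurable `{0,1}`-valued functions with
respect to the measure `μ`: every pair `(l, u) ∈ B` consists of measurable `{0,1}`-valued
functions with `l ≤ u` pointwise and `μ {x | l x ≠ u x} ≤ ε`, and every `f ∈ F` lies in
some bracket `[l, u]` of `B` pointwise. -/
def IsBracketing {X : Type*} [MeasurableSpace X] (μ : Measure X) (ε : ℝ)
    (F : Set (X → ℝ)) (B : Finset ((X → ℝ) × (X → ℝ))) : Prop :=
  (∀ lu ∈ B,
      Measurable lu.1 ∧ Measurable lu.2 ∧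
      (∀ x, lu.1 x = 0 ∨ lu.1 x = 1) ∧ (∀ x, lu.2 x = 0 ∨ lu.2 x = 1) ∧
      (∀ x, lu.1 x ≤ lu.2 x) ∧
      μ {x | lu.1 x ≠ lu.2 x} ≤ ENNReal.ofReal ε) ∧
  (∀ f ∈ F, ∃ lu ∈ B, (∀ x, lu.1 x ≤ f x) ∧ (∀ x, f x ≤ lu.2 x))

/-- **Theorem 4, intersection part (bracketing number of k-fold intersections).**
If each class `F i` of measurable `{0,1}`-valued functions admits an `ε`-bracketing of size
`N i` with respect to `μ`, then the class of pointwise intersections (minima)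
`x ↦ min (f 0 x, …, f (k-1) x)` admits a `(k ε)`-bracketing of size at most `∏ i, N i`. -/
theorem bracketing_kfold_intersection
    {X : Type*} [MeasurableSpace X] (μ : Measure X)
    (k : ℕ) (hk : 1 ≤ k) (ε : ℝ) (hε : 0 < ε)
    (F : Fin k → Set (X → ℝ))
    (hF : ∀ i, ∀ f ∈ F i, Measurable f ∧ ∀ x, f x = 0 ∨ f x = 1)
    (N : Fin k → ℕ)
    (hN : ∀ i, ∃ B, IsBracketing μ ε (F i) B ∧ B.card = N i) :
    ∃ B, IsBracketing μ (k * ε)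
        { g | ∃ f : Fin k → (X → ℝ), (∀ i, f i ∈ F i) ∧ g = fun x => ⨅ i, f i x } B ∧
      B.card ≤ ∏ i, N i := by
  classical
  haveI : Nonempty (Fin k) := ⟨⟨0, hk⟩⟩
  choose B hB hc using hN
  have h01 : ∀ g : Fin k → ℝ, (∀ i, g i = 0 ∨ g i = 1) → (⨅ i, g i) = 0 ∨ (⨅ i, g i) = 1 := by
    intro g hg
    obtain ⟨i, hi⟩ := exists_eq_ciInf_of_finite (f := g)
    rw [← hi]
    exact hg i
  refine ⟨(Fintype.piFinset B).image
    (fun p => (fun x => ⨅ i, (p i).1 x, fun x => ⨅ i, (p i).2 x)), ⟨?_, ?_⟩, ?_⟩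
  · intro lu hlu
    obtain ⟨p, hp, rfl⟩ := Finset.mem_image.1 hlu
    rw [Fintype.mem_piFinset] at hp
    have h := fun i => (hB i).1 (p i) (hp i)
    refine ⟨Measurable.iInf fun i => (h i).1, Measurable.iInf fun i => (h i).2.1,
      fun x => h01 _ fun i => (h i).2.2.1 x, fun x => h01 _ fun i => (h i).2.2.2.1 x,
      fun x => ciInf_mono (Set.finite_range _).bddBelow fun i => (h i).2.2.2.2.1 x, ?_⟩
    calc μ {x | (⨅ i, (p i).1 x) ≠ ⨅ i, (p i).2 x}
        ≤ μ (⋃ i, {x | (p i).1 x ≠ (p i).2 x}) := by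
          apply measure_mono
          intro x hx
          by_contra hcon
          simp only [Set.mem_iUnion, Set.mem_setOf_eq, not_exists, not_not] at hcon
          exact hx (iInf_congr hcon)
      _ ≤ ∑ i, μ {x | (p i).1 x ≠ (p i).2 x} := measure_iUnion_fintype_le _ _
      _ ≤ ∑ _i : Fin k, ENNReal.ofReal ε := Finset.sum_le_sum fun i _ => (h i).2.2.2.2.2
      _ = ENNReal.ofReal (k * ε) := by
          rw [ENNReal.ofReal_mul (Nat.cast_nonneg k)]
          simp
  · rintro g ⟨f, hf, rfl⟩
    choose p hp hl hu using fun i => (hB i).2 (f i) (hf i)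
    refine ⟨_, Finset.mem_image_of_mem _ (Fintype.mem_piFinset.2 hp), ?_, ?_⟩
    · exact fun x => ciInf_mono (Set.finite_range _).bddBelow fun i => hl i x
    · exact fun x => ciInf_mono (Set.finite_range _).bddBelow fun i => hu i x
  · refine Finset.card_image_le.trans ?_
    rw [Fintype.card_piFinset]
    simp [hc]
end

section
/- Let X be a measurable space with measure μ, let k ≥ 1, let ε > 0, and let F_1, …, F_k be classes of measurable functions X → {0,1}. Suppose each F_i admits an ε-bracketing of size N_i with respect to μ. Then the class F_1 + F_2 + ⋯ + F_k = { x ↦ max(f_1(x), …, f_k(x)) : f_i ∈ F_i for each i } (pointwise unions) admits a (kε)-bracketing of size at most N_1 · N_2 ⋯ N_k with respect to μ. -/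
open MeasureTheory

/-- **Theorem 4, union part (bracketing number of k-fold unions).**
If each class `F i` of measurable `{0,1}`-valued functions admits an `ε`-bracketing of size
`N i` with respect to `μ`, then the class of pointwise unions (maxima)
`x ↦ max (f 0 x, …, f (k-1) x)` admits a `(k ε)`-bracketing of size at most `∏ i, N i`. -/
theorem bracketing_kfold_union
    {X : Type*} [MeasurableSpace X] (μ : Measure X)
    (k : ℕ) (hk : 1 ≤ k) (ε : ℝ) (hε : 0 < ε)
    (F : Fin k → Set (X → ℝ))
    (hF : ∀ i, ∀ f ∈ F i, Measurable f ∧ ∀ x, f x = 0 ∨ f x = 1)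
    (N : Fin k → ℕ)
    (hN : ∀ i, ∃ B, IsBracketing μ ε (F i) B ∧ B.card = N i) :
    ∃ B, IsBracketing μ (k * ε)
        { g | ∃ f : Fin k → (X → ℝ), (∀ i, f i ∈ F i) ∧ g = fun x => ⨆ i, f i x } B ∧
      B.card ≤ ∏ i, N i := by
  classical
  haveI : Nonempty (Fin k) := ⟨⟨0, hk⟩⟩
  choose B hB hcard using hN
  have bdd : ∀ h : Fin k → ℝ, BddAbove (Set.range h) := fun h => (Set.finite_range h).bddAbove
  have h01 : ∀ h : Fin k → ℝ, (∀ i, h i = 0 ∨ h i = 1) → (⨆ i, h i) = 0 ∨ (⨆ i, h i) = 1 := by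
    intro h hh
    obtain ⟨i, hi⟩ := exists_eq_ciSup_of_finite (f := h)
    rw [← hi]
    exact hh i
  refine ⟨(Fintype.piFinset B).image
    (fun p => (fun x => ⨆ i, (p i).1 x, fun x => ⨆ i, (p i).2 x)), ⟨?_, ?_⟩, ?_⟩
  · intro lu hlu
    obtain ⟨p, hp, rfl⟩ := Finset.mem_image.1 hlu
    rw [Fintype.mem_piFinset] at hp
    have H := fun i => (hB i).1 (p i) (hp i)
    refine ⟨Measurable.iSup fun i => (H i).1, Measurable.iSup fun i => (H i).2.1,
      fun x => h01 _ fun i => (H i).2.2.1 x, fun x => h01 _ fun i => (H i).2.2.2.1 x,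
      fun x => ciSup_mono (bdd _) fun i => (H i).2.2.2.2.1 x, ?_⟩
    have hsub : {x | (⨆ i, (p i).1 x) ≠ ⨆ i, (p i).2 x} ⊆ ⋃ i, {x | (p i).1 x ≠ (p i).2 x} := by
      intro x hx
      by_contra hcon
      simp only [Set.mem_iUnion, Set.mem_setOf_eq, not_exists, not_not] at hcon
      exact hx (iSup_congr hcon)
    calc μ {x | (⨆ i, (p i).1 x) ≠ ⨆ i, (p i).2 x}
        ≤ μ (⋃ i, {x | (p i).1 x ≠ (p i).2 x}) := measure_mono hsub
      _ ≤ ∑ i, μ {x | (p i).1 x ≠ (p i).2 x} := measure_iUnion_fintype_le μ _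
      _ ≤ ∑ _i : Fin k, ENNReal.ofReal ε := Finset.sum_le_sum fun i _ => (H i).2.2.2.2.2
      _ = ENNReal.ofReal (k * ε) := by
        rw [ENNReal.ofReal_mul (Nat.cast_nonneg k)]
        simp
  · rintro g ⟨f, hf, rfl⟩
    choose p hp hl hu using fun i => (hB i).2 (f i) (hf i)
    exact ⟨_, Finset.mem_image_of_mem _ (Fintype.mem_piFinset.2 hp),
      fun x => ciSup_mono (bdd _) fun i => hl i x, fun x => ciSup_mono (bdd _) fun i => hu i x⟩
  · refine Finset.card_image_le.trans ?_
    rw [Fintype.card_piFinset]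
    exact (Finset.prod_congr rfl fun i _ => hcard i).le
end

section
/- Let X be a measurable space with measure μ, let ε > 0, and let F be a class of measurable functions X → {0,1} that admits an ε-bracketing of size N with respect to μ. Then the class G = { x ↦ 1(f(x) ≠ f'(x)) : f, f' ∈ F } of all symmetric differences of pairs of functions in F admits a (4ε)-bracketing of size at most N^4 with respect to μ. -/
open MeasureTheory

/-- **Theorem 4, symmetric-difference part.**
If a class `F` of measurable `{0,1}`-valued functions admits an `ε`-bracketing of size `N`
with respect to `μ`, then the class of symmetric differences `x ↦ 1(f x ≠ f' x)` for
`f, f' ∈ F` admits a `(4 ε)`-bracketing of size at most `N ^ 4`. -/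
theorem bracketing_symmDiff
    {X : Type*} [MeasurableSpace X] (μ : Measure X)
    (ε : ℝ) (hε : 0 < ε)
    (F : Set (X → ℝ))
    (hF : ∀ f ∈ F, Measurable f ∧ ∀ x, f x = 0 ∨ f x = 1)
    (N : ℕ)
    (B : Finset ((X → ℝ) × (X → ℝ)))
    (hB : IsBracketing μ ε F B) (hBcard : B.card = N) :
    ∃ B', IsBracketing μ (4 * ε)
        { g | ∃ f ∈ F, ∃ f' ∈ F, g = fun x => if f x ≠ f' x then (1 : ℝ) else 0 } B' ∧
      B'.card ≤ N ^ 4 := by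
  classical
  obtain ⟨h1, h2⟩ := hB
  let L : ((X → ℝ) × (X → ℝ)) × ((X → ℝ) × (X → ℝ)) → (X → ℝ) × (X → ℝ) := fun p =>
    (fun x => max (max (p.1.1 x - p.2.2 x) (p.2.1 x - p.1.2 x)) 0,
     fun x => max (max (p.1.2 x - p.2.1 x) (p.2.2 x - p.1.1 x)) 0)
  refine ⟨(B ×ˢ B).image L, ⟨?_, ?_⟩, ?_⟩
  · intro lu hlu
    obtain ⟨⟨a, b⟩, hab, rfl⟩ := Finset.mem_image.1 hlu
    obtain ⟨ha, hb⟩ := Finset.mem_product.1 hab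
    obtain ⟨a1, a2, a3, a4, a5, a6⟩ := h1 a ha
    obtain ⟨b1, b2, b3, b4, b5, b6⟩ := h1 b hb
    refine ⟨?_, ?_, ?_, ?_, ?_, ?_⟩
    · exact ((a1.sub b2).max (b1.sub a2)).max measurable_const
    · exact ((a2.sub b1).max (b2.sub a1)).max measurable_const
    · intro x
      rcases a3 x with h | h <;> rcases b3 x with h' | h' <;> rcases a4 x with k | k <;>
        rcases b4 x with k' | k' <;> simp [L, h, h', k, k']
    · intro x
      have := a5 x
      have := b5 x
      rcases a3 x with h | h <;> rcases b3 x with h' | h' <;> rcases a4 x with k | k <;>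
        rcases b4 x with k' | k' <;> simp [L, h, h', k, k']
    · intro x
      have := a5 x
      have := b5 x
      refine max_le_max (max_le_max ?_ ?_) le_rfl <;> dsimp only <;> linarith
    · have hs : {x | (L (a, b)).1 x ≠ (L (a, b)).2 x} ⊆
          {x | a.1 x ≠ a.2 x} ∪ {x | b.1 x ≠ b.2 x} := by
        intro x hx
        by_contra hc
        simp only [Set.mem_union, Set.mem_ofPred_eq, not_or, not_not] at hc
        apply hx
        simp only [L, hc.1, hc.2]
      calc _ ≤ μ ({x | a.1 x ≠ a.2 x} ∪ {x | b.1 x ≠ b.2 x}) := measure_mono hs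
        _ ≤ _ := measure_union_le _ _
        _ ≤ ENNReal.ofReal ε + ENNReal.ofReal ε := add_le_add a6 b6
        _ = ENNReal.ofReal (ε + ε) := (ENNReal.ofReal_add hε.le hε.le).symm
        _ ≤ _ := ENNReal.ofReal_le_ofReal (by linarith)
  · rintro g ⟨f, hf, f', hf', rfl⟩
    obtain ⟨a, ha, al, au⟩ := h2 f hf
    obtain ⟨b, hb, bl, bu⟩ := h2 f' hf'
    refine ⟨L (a, b), Finset.mem_image_of_mem _ (Finset.mem_product.2 ⟨ha, hb⟩), ?_, ?_⟩
    · intro x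
      have h3 := al x
      have h4 := au x
      have h5 := bl x
      have h6 := bu x
      rcases (hF f hf).2 x with h | h <;> rcases (hF f' hf').2 x with h' | h' <;>
        simp only [h, h'] at h3 h4 h5 h6 <;> simp [L, h, h'] <;> constructor <;> linarith
    · intro x
      have h3 := al x
      have h4 := au x
      have h5 := bl x
      have h6 := bu x
      rcases (hF f hf).2 x with h | h <;> rcases (hF f' hf').2 x with h' | h' <;>
        simp only [h, h'] at h3 h4 h5 h6 <;> simp [L, h, h']
      · left; right; linarith
      · left; left; linarith
  · refine Finset.card_image_le.trans ?_
    rw [Finset.card_product, hBcard]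
    rcases Nat.eq_zero_or_pos N with h | h
    · simp [h]
    · calc N * N = N ^ 2 := by ring
        _ ≤ N ^ 4 := Nat.pow_le_pow_right h (by norm_num)
end

section
/- There exists a universal constant c ≥ 1 such that the following holds. Let m ≥ 1, let X be a measurable space, let ψ : X → ℝ^m be a measurable map, and let G be a class of functions X → {0,1} such that every g ∈ G can be written as g = h ∘ ψ where h is a halfspace indicator on ℝ^m, i.e., h(z) = 1(⟨a, z⟩ + b ≥ 0) for some a ∈ ℝ^m and b ∈ ℝ. Then for every probability measure ν on X and every ε ∈ (0,1), G admits an ε-bracketing with respect to ν of size at most (c m / ε)^{c m}. -/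
open MeasureTheory

lemma net_aux {X : Type} [MeasurableSpace X] (ν : Measure X) [IsProbabilityMeasure ν] (n : ℕ)
    (J : Finset (Fin n)) (k : ℕ) (hJ : J.card ≤ k) (D : Set ((Fin n → X) × X))
    (hD : MeasurableSet D)
    (hdep : ∀ x x' : Fin n → X, (∀ i ∈ J, x i = x' i) → ∀ y, (x, y) ∈ D ↔ (x', y) ∈ D)
    (ε : ℝ) (hε : 0 < ε) :
    Measure.pi (fun _ : Fin n => ν)
      {x | ENNReal.ofReal ε < ν {y | (x, y) ∈ D} ∧ ∀ i ∈ Jᶜ, (x, x i) ∉ D} ≤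
      ENNReal.ofReal (1 - ε) ^ (n - k) := by
  classical
  set A : Set (Fin n → X) :=
    {x | ENNReal.ofReal ε < ν {y | (x, y) ∈ D} ∧ ∀ i ∈ Jᶜ, (x, x i) ∉ D} with hA
  have hAm : MeasurableSet A := by
    have h1 : Measurable fun x : Fin n → X => ν {y | (x, y) ∈ D} :=
      measurable_measure_prodMk_left hD
    have h2 : MeasurableSet {x : Fin n → X | ∀ i ∈ Jᶜ, (x, x i) ∉ D} := by
      have : {x : Fin n → X | ∀ i ∈ Jᶜ, (x, x i) ∉ D} =
          ⋂ i ∈ Jᶜ, (fun x : Fin n → X => (x, x i)) ⁻¹' Dᶜ := by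
        ext x; simp
      rw [this]
      refine Finset.measurableSet_biInter _ fun i _ => ?_
      exact (measurable_id.prodMk (measurable_pi_apply i)) hD.compl
    exact (measurableSet_lt measurable_const h1).inter h2
  have hne : Nonempty X := ν.nonempty_of_neZero
  let x0 : Fin n → X := fun _ => hne.some
  have hf : Measurable (A.indicator (1 : (Fin n → X) → ENNReal)) :=
    measurable_one.indicator hAm
  rw [← lintegral_indicator_one hAm, lintegral_eq_lmarginal_univ x0,
    ← Finset.union_compl J, lmarginal_union _ _ hf disjoint_compl_right]
  have inner : ∀ x, (∫⋯∫⁻_Jᶜ, A.indicator (1 : (Fin n → X) → ENNReal) ∂(fun _ => ν)) x ≤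
      ENNReal.ofReal (1 - ε) ^ (n - k) := by
    intro x
    rw [lmarginal]
    have hup : ∀ (y : (i : (Jᶜ : Finset (Fin n))) → X) z,
        (Function.updateFinset x Jᶜ y, z) ∈ D ↔ (x, z) ∈ D := by
      intro y z
      apply hdep
      intro i hi
      have : i ∉ Jᶜ := by simpa using hi
      simp [Function.updateFinset, hi]
    by_cases hx : ENNReal.ofReal ε < ν {y | (x, y) ∈ D}
    · have hs : ν ({y | (x, y) ∈ D}ᶜ) ≤ ENNReal.ofReal (1 - ε) := by
        have hm : MeasurableSet {y | (x, y) ∈ D} := measurable_prodMk_left hD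
        rw [prob_compl_eq_one_sub hm, ENNReal.ofReal_sub _ hε.le, ENNReal.ofReal_one]
        exact tsub_le_tsub_left hx.le _
      calc _ ≤ ∫⁻ y, (Set.univ.pi fun _ => {y | (x, y) ∈ D}ᶜ).indicator 1 y
              ∂(Measure.pi fun _ : (Jᶜ : Finset (Fin n)) => ν) := by
            apply lintegral_mono
            intro y
            show A.indicator 1 (Function.updateFinset x Jᶜ y) ≤ _
            by_cases hy : Function.updateFinset x Jᶜ y ∈ A
            · have : y ∈ (Set.univ.pi fun _ : (Jᶜ : Finset (Fin n)) => {y | (x, y) ∈ D}ᶜ) := by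
                intro i _ hi
                have h3 := hy.2 i.1 i.2
                rw [hup] at h3
                apply h3
                simpa [Function.updateFinset, i.2] using hi
              simp [Set.indicator_of_mem hy, Set.indicator_of_mem this]
            · simp [Set.indicator_of_notMem hy]
        _ = ν ({y | (x, y) ∈ D}ᶜ) ^ (Jᶜ).card := by
            have hm : MeasurableSet ({y | (x, y) ∈ D}ᶜ) := (measurable_prodMk_left hD).compl
            rw [lintegral_indicator_one (MeasurableSet.univ_pi fun _ => hm), Measure.pi_pi]
            simp
        _ ≤ ENNReal.ofReal (1 - ε) ^ (Jᶜ).card := by gcongr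
        _ ≤ _ := by
            apply pow_le_pow_right_of_le_one' 
            · simp [ENNReal.ofReal_le_one, hε.le]
            · rw [Finset.card_compl, Fintype.card_fin]; omega
    · have : ∀ y : (i : (Jᶜ : Finset (Fin n))) → X, Function.updateFinset x Jᶜ y ∉ A := by
        intro y hy
        apply hx
        have := hy.1
        simpa only [hup] using this
      simp [Set.indicator_of_notMem (this _)]
  calc _ ≤ (∫⋯∫⁻_J, (fun _ => ENNReal.ofReal (1 - ε) ^ (n - k)) ∂(fun _ => ν)) x0 :=
        lmarginal_mono inner x0
    _ = _ := by simp [lmarginal]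

lemma net {X : Type} [MeasurableSpace X] (ν : Measure X) [IsProbabilityMeasure ν] (n : ℕ)
    {Θ : Type} [Fintype Θ]
    (J : Θ → Finset (Fin n)) (k : ℕ) (hJ : ∀ θ, (J θ).card ≤ k)
    (D : Θ → Set ((Fin n → X) × X)) (hD : ∀ θ, MeasurableSet (D θ))
    (hdep : ∀ θ, ∀ x x' : Fin n → X, (∀ i ∈ J θ, x i = x' i) →
      ∀ y, (x, y) ∈ D θ ↔ (x', y) ∈ D θ)
    (ε : ℝ) (hε : 0 < ε) (hε1 : ε < 1) (hn : (Fintype.card Θ : ℝ) * (1 - ε) ^ (n - k) < 1) :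
    ∃ x : Fin n → X, ∀ θ, (∀ i, (x, x i) ∉ D θ) → ν {y | (x, y) ∈ D θ} ≤ ENNReal.ofReal ε := by
  by_contra! hcon
  have hcov : (Set.univ : Set (Fin n → X)) ⊆ ⋃ θ,
      {x | ENNReal.ofReal ε < ν {y | (x, y) ∈ D θ} ∧ ∀ i ∈ (J θ)ᶜ, (x, x i) ∉ D θ} := by
    intro x _
    obtain ⟨θ, h1, h2⟩ := hcon x
    exact Set.mem_iUnion.2 ⟨θ, h2, fun i _ => h1 i⟩
  have h1 : (1 : ENNReal) ≤ ENNReal.ofReal ((Fintype.card Θ : ℝ) * (1 - ε) ^ (n - k)) := by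
    calc (1 : ENNReal) = Measure.pi (fun _ : Fin n => ν) Set.univ := by simp
      _ ≤ _ := measure_mono hcov
      _ ≤ ∑ θ, _ := measure_iUnion_fintype_le _ _
      _ ≤ ∑ θ : Θ, ENNReal.ofReal (1 - ε) ^ (n - k) :=
          Finset.sum_le_sum fun θ _ => net_aux ν n (J θ) k (hJ θ) (D θ) (hD θ) (hdep θ) ε hε
      _ = _ := by
          rw [ENNReal.ofReal_mul (by positivity), ENNReal.ofReal_pow (by linarith)]
          simp
  rw [ENNReal.one_le_ofReal] at h1
  linarith


/-- extreme rays -/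
lemma exists_extreme {V ι : Type} [AddCommGroup V] [Module ℝ V] [FiniteDimensional ℝ V]
    [Fintype ι] (u : ι → V) (hu : Submodule.span ℝ (Set.range u) = ⊤)
    (I : Finset ι) (w : Module.Dual ℝ V) (hw0 : w ≠ 0) (hwK : ∀ i, 0 ≤ w (u i))
    (hwI : ∀ i ∈ I, w (u i) = 0) :
    ∃ p : Module.Dual ℝ V, p ≠ 0 ∧ (∀ i, 0 ≤ p (u i)) ∧ (∀ i ∈ I, p (u i) = 0) ∧
      ∀ q : Module.Dual ℝ V, (∀ i, p (u i) = 0 → q (u i) = 0) → ∃ t : ℝ, q = t • p := by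
  classical
  let Z : Module.Dual ℝ V → Finset ι := fun p => Finset.univ.filter fun i => p (u i) = 0
  let S : Set ℕ := {k | ∃ p : Module.Dual ℝ V, p ≠ 0 ∧ (∀ i, 0 ≤ p (u i)) ∧
    (∀ i ∈ I, p (u i) = 0) ∧ (Z p).card = k}
  have hSne : S.Nonempty := ⟨_, w, hw0, hwK, hwI, rfl⟩
  have hSb : BddAbove S := ⟨Fintype.card ι, by
    rintro k ⟨p, _, _, _, rfl⟩; exact Finset.card_le_univ _⟩
  obtain ⟨p, hp0, hpK, hpI, hpc⟩ := Nat.sSup_mem hSne hSb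
  refine ⟨p, hp0, hpK, hpI, ?_⟩
  by_contra! hcon
  obtain ⟨q, hq, hqp⟩ := hcon
  -- find i with q (u i) ≠ 0
  have hex : ∃ i, q (u i) ≠ 0 := by
    by_contra! h
    apply hqp 0
    rw [zero_smul]
    apply LinearMap.ext_on_range hu
    intro i; simpa using h i
  let T : Finset ι := Finset.univ.filter fun i => q (u i) ≠ 0
  have hT : T.Nonempty := by obtain ⟨i, hi⟩ := hex; exact ⟨i, by simp [T, hi]⟩
  obtain ⟨j, hjT, hjmin⟩ := T.exists_min_image (fun i => p (u i) / |q (u i)|) hT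
  have hqj : q (u j) ≠ 0 := by simpa [T] using hjT
  set t : ℝ := -(p (u j) / q (u j)) with ht
  have htabs : |t| = p (u j) / |q (u j)| := by
    rw [ht, abs_neg, abs_div, abs_of_nonneg (hpK j)]
  set p' : Module.Dual ℝ V := p + t • q with hp'
  have hp'0 : p' ≠ 0 := by
    intro h
    have h2 : p = (-t) • q := by
      apply LinearMap.ext
      intro y
      have := LinearMap.congr_fun h y
      simp only [hp', LinearMap.add_apply, LinearMap.smul_apply, smul_eq_mul,
        LinearMap.zero_apply] at this ⊢
      linarith
    have htne : t ≠ 0 := by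
      intro h0; apply hp0; rw [h2, h0]; simp
    apply hqp ((-t)⁻¹)
    rw [h2, smul_smul, inv_mul_cancel₀ (neg_ne_zero.2 htne), one_smul]
  have hp'K : ∀ i, 0 ≤ p' (u i) := by
    intro i
    simp only [hp', LinearMap.add_apply, LinearMap.smul_apply, smul_eq_mul]
    by_cases hi : q (u i) = 0
    · simp [hi, hpK i]
    · have h1 := hjmin i (by simp [T, hi])
      rw [← htabs, le_div_iff₀ (abs_pos.2 hi), ← abs_mul] at h1
      linarith [neg_abs_le (t * q (u i))]
  have hZ : ∀ i, p (u i) = 0 → p' (u i) = 0 := by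
    intro i hi
    simp [hp', hi, hq i hi]
  have hp'j : p' (u j) = 0 := by
    simp only [hp', LinearMap.add_apply, LinearMap.smul_apply, smul_eq_mul, ht]
    field_simp; ring
  have hpj : p (u j) ≠ 0 := fun h => hqj (hq j h)
  have hlt : (Z p).card < (Z p').card := by
    apply Finset.card_lt_card
    refine Finset.ssubset_iff_subset_ne.2 ⟨?_, ?_⟩
    · intro i hi
      simp only [Z, Finset.mem_filter, Finset.mem_univ, true_and] at hi ⊢
      exact hZ i hi
    · intro h
      have : j ∈ Z p := by rw [h]; simp [Z, hp'j]
      simp [Z] at this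
      exact hpj this
  have : (Z p').card ≤ sSup S := le_csSup hSb ⟨p', hp'0, hp'K, fun i hi => hZ i (hpI i hi), rfl⟩
  omega

/-- A code gives a tuple of functionals. -/
noncomputable def tup {V ι : Type} [AddCommGroup V] [Module ℝ V] [DecidableEq ι]
    (pch : Finset ι → Module.Dual ℝ V) :
    (r : ℕ) → Finset ι → (Fin r → ι × Bool) → (Fin r → Module.Dual ℝ V)
  | 0, _, _ => fun _ => 0
  | r + 1, I, c => Fin.cons (if (c 0).2 then pch I else 0)
      (tup pch r (insert (c 0).1 I) (Fin.tail c))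

lemma tup_mem {V ι : Type} [AddCommGroup V] [Module ℝ V] [DecidableEq ι]
    (pch : Finset ι → Module.Dual ℝ V) (Q : Module.Dual ℝ V → Prop) (h0 : Q 0)
    (hQ : ∀ I, Q (pch I)) (r : ℕ) : ∀ (I : Finset ι) (c : Fin r → ι × Bool) (a : Fin r),
    Q (tup pch r I c a) := by
  induction r with
  | zero => intro I c a; exact a.elim0
  | succ r ih =>
    intro I c a
    rw [tup]
    refine Fin.cases ?_ (fun b => ?_) a
    · rw [Fin.cons_zero]; split_ifs
      · exact hQ I
      · exact h0
    · rw [Fin.cons_succ]; exact ih _ _ _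

def Good {V : Type} [AddCommGroup V] [Module ℝ V] {r : ℕ} (w : Module.Dual ℝ V)
    (P : Fin r → Module.Dual ℝ V) : Prop :=
  ∀ y, ((∀ a, 0 ≤ P a y) → 0 ≤ w y) ∧ ((∀ a, P a y ≤ 0) → w y ≤ 0) ∧
    ((∀ a, P a y ≤ 0) → (∃ a, P a y < 0) → w y < 0)

lemma exists_code {V ι : Type} [AddCommGroup V] [Module ℝ V] [FiniteDimensional ℝ V]
    [Fintype ι] [DecidableEq ι] [Nonempty ι] (u : ι → V)
    (hu : Submodule.span ℝ (Set.range u) = ⊤)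
    (pch : Finset ι → Module.Dual ℝ V)
    (hpch : ∀ I : Finset ι, (∃ w : Module.Dual ℝ V, w ≠ 0 ∧ (∀ i, 0 ≤ w (u i)) ∧
      ∀ i ∈ I, w (u i) = 0) →
      pch I ≠ 0 ∧ (∀ i, 0 ≤ pch I (u i)) ∧ ∀ i ∈ I, pch I (u i) = 0) (r : ℕ) :
    ∀ (I : Finset ι) (w : Module.Dual ℝ V), (∀ i, 0 ≤ w (u i)) → (∀ i ∈ I, w (u i) = 0) →
      (w = 0 ∨ Module.finrank ℝ V ≤ Module.finrank ℝ (Submodule.span ℝ (u '' I)) + r) →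
      ∃ c : Fin r → ι × Bool, Good w (tup pch r I c) := by
  induction r with
  | zero =>
    intro I w hK hI h
    have hw : w = 0 := by
      rcases h with h | h
      · exact h
      · have hs : Submodule.span ℝ (u '' I) = ⊤ :=
          Submodule.eq_top_of_finrank_eq (le_antisymm (Submodule.finrank_le _) (by simpa using h))
        apply LinearMap.ext_on hs
        rintro _ ⟨i, hi, rfl⟩
        simpa using hI i hi
    refine ⟨fun a => a.elim0, fun y => ?_⟩
    subst hw
    simp
  | succ r ih =>
    intro I w hK hI h
    by_cases hw : w = 0
    · obtain ⟨c, hc⟩ := ih (insert (Classical.arbitrary ι) I) 0 (by simp) (by simp) (Or.inl rfl)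
      refine ⟨Fin.cons (Classical.arbitrary ι, false) c, fun y => ?_⟩
      subst hw
      have := hc y
      simp only [tup, Fin.cons_zero, Fin.tail_cons, Fin.forall_fin_succ, Fin.exists_fin_succ,
        Fin.cons_succ]
      simpa using this
    · obtain ⟨hp0, hpK, hpI⟩ := hpch I ⟨w, hw, hK, hI⟩
      have h := h.resolve_left hw
      set p := pch I with hp
      have hex : ∃ i, p (u i) ≠ 0 := by
        by_contra! h
        apply hp0
        apply LinearMap.ext_on_range hu
        intro i; simpa using h i
      let T : Finset ι := Finset.univ.filter fun i => p (u i) ≠ 0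
      have hT : T.Nonempty := by obtain ⟨i, hi⟩ := hex; exact ⟨i, by simp [T, hi]⟩
      obtain ⟨j, hjT, hjmin⟩ := T.exists_min_image (fun i => w (u i) / p (u i)) hT
      have hpj : p (u j) ≠ 0 := by simpa [T] using hjT
      set t : ℝ := w (u j) / p (u j) with ht
      have ht0 : 0 ≤ t := div_nonneg (hK j) (hpK j)
      set w' : Module.Dual ℝ V := w - t • p with hw'
      have hw'K : ∀ i, 0 ≤ w' (u i) := by
        intro i
        simp only [hw', LinearMap.sub_apply, LinearMap.smul_apply, smul_eq_mul]
        by_cases hi : p (u i) = 0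
        · simp [hi, hK i]
        · have h1 := hjmin i (by simp [T, hi])
          rw [le_div_iff₀ (lt_of_le_of_ne (hpK i) (Ne.symm hi))] at h1
          linarith
      have hw'I : ∀ i ∈ insert j I, w' (u i) = 0 := by
        intro i hi
        simp only [hw', LinearMap.sub_apply, LinearMap.smul_apply, smul_eq_mul]
        rcases Finset.mem_insert.1 hi with rfl | hi
        · rw [ht]; field_simp; ring
        · simp [hI i hi, hpI i hi]
      have hrank : Module.finrank ℝ (Submodule.span ℝ (u '' I)) <
          Module.finrank ℝ (Submodule.span ℝ (u '' (insert j I : Finset ι))) := by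
        apply Submodule.finrank_lt_finrank_of_lt
        refine lt_of_le_of_ne (Submodule.span_mono (Set.image_mono (by simp))) ?_
        intro heq
        have h1 : u j ∈ Submodule.span ℝ (u '' I) := by
          rw [heq]; exact Submodule.subset_span ⟨j, by simp, rfl⟩
        have h2 : Submodule.span ℝ (u '' I) ≤ LinearMap.ker p := by
          rw [Submodule.span_le]
          rintro _ ⟨i, hi, rfl⟩
          exact hpI i hi
        exact hpj (h2 h1)
      obtain ⟨c, hc⟩ := ih (insert j I) w' hw'K hw'I (Or.inr (by omega))
      refine ⟨Fin.cons (j, decide (0 < t)) c, fun y => ?_⟩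
      obtain ⟨h1, h2, h3⟩ := hc y
      have hwy : w y = w' y + t * p y := by simp [hw']
      simp only [tup, Fin.cons_zero, Fin.tail_cons, Fin.forall_fin_succ, Fin.exists_fin_succ,
        Fin.cons_succ, decide_eq_true_eq, ← hp]
      rw [hwy]
      split_ifs with htp
      · refine ⟨fun ⟨ha, hb⟩ => add_nonneg (h1 hb) (mul_nonneg ht0 ha), fun ⟨ha, hb⟩ => ?_, ?_⟩
        · have := h2 hb; nlinarith
        · rintro ⟨ha, hb⟩ (hc | hc)
          · have := h2 hb; nlinarith
          · have := h3 hb hc; nlinarith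
      · have : t = 0 := le_antisymm (not_lt.1 htp) ht0
        simp only [this, zero_mul, add_zero, LinearMap.zero_apply, le_refl, true_and, lt_irrefl,
          false_or]
        exact ⟨h1, h2, h3⟩

/-- counting sign patterns -/
lemma card_patterns {V ι : Type} [AddCommGroup V] [Module ℝ V] [FiniteDimensional ℝ V]
    [Fintype ι] [DecidableEq ι] (v : ι → V) (𝒜 : Finset (Finset ι))
    (h𝒜 : ∀ A ∈ 𝒜, ∃ w : Module.Dual ℝ V, ∀ i, i ∈ A ↔ 0 ≤ w (v i)) :
    𝒜.card ≤ (Fintype.card ι + 1) ^ (Module.finrank ℝ V) := by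
  have hvc : 𝒜.vcDim ≤ Module.finrank ℝ V := by
    apply Finset.sup_le
    intro s hs
    rw [Finset.mem_shatterer] at hs
    by_contra! hlt
    have hdep : ¬ LinearIndependent ℝ (fun i : s => v i) := by
      intro hli
      have := hli.fintype_card_le_finrank
      simp at this
      omega
    rw [Fintype.not_linearIndependent_iff] at hdep
    obtain ⟨g, hg, i0, hi0⟩ := hdep
    have key : ∀ g : s → ℝ, ∑ i, g i • v i = 0 → ∀ i0, ¬ g i0 < 0 := by
      intro g hg i0 hi0
      obtain ⟨A, hA, hAs⟩ := hs (t := (Finset.univ.filter fun i : s => 0 ≤ g i).map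
        (Function.Embedding.subtype _)) (by
          intro i hi
          simp at hi
          obtain ⟨h, _⟩ := hi
          exact h)
      obtain ⟨w, hw⟩ := h𝒜 A hA
      have hiff : ∀ i : s, 0 ≤ w (v i) ↔ 0 ≤ g i := by
        intro i
        rw [← hw]
        have := Finset.ext_iff.1 hAs i
        simpa using this
      have hsum : ∑ i, g i * w (v i) = 0 := by
        have := congrArg w hg
        simpa using this
      have hpos : 0 < ∑ i, g i * w (v i) := by
        apply Finset.sum_pos' 
        · intro i _
          by_cases h : 0 ≤ g i
          · exact mul_nonneg h ((hiff i).2 h)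
          · have h' : ¬ 0 ≤ w (v i) := fun h2 => h ((hiff i).1 h2)
            push Not at h h'
            exact (mul_pos_of_neg_of_neg h h').le
        · refine ⟨i0, Finset.mem_univ _, ?_⟩
          have h' : ¬ 0 ≤ w (v i0) := fun h2 => (not_le.2 hi0) ((hiff i0).1 h2)
          exact mul_pos_of_neg_of_neg hi0 (not_le.1 h')
      linarith
    rcases lt_or_gt_of_ne hi0 with h | h
    · exact key g hg i0 h
    · refine key (-g) ?_ i0 (by simpa using h)
      simpa only [Pi.neg_apply, neg_smul, Finset.sum_neg_distrib, neg_eq_zero] using hg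
  calc 𝒜.card ≤ 𝒜.shatterer.card := Finset.card_le_card_shatterer _
    _ ≤ ∑ k ∈ Finset.Iic 𝒜.vcDim, (Fintype.card ι).choose k :=
        Finset.card_shatterer_le_sum_vcDim
    _ ≤ ∑ k ∈ Finset.Iic (Module.finrank ℝ V), (Fintype.card ι).choose k :=
        Finset.sum_le_sum_of_subset (Finset.Iic_subset_Iic.2 hvc)
    _ ≤ ∑ k ∈ Finset.range (Module.finrank ℝ V + 1),
          Fintype.card ι ^ k * 1 ^ (Module.finrank ℝ V - k) * (Module.finrank ℝ V).choose k := by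
        have : Finset.Iic (Module.finrank ℝ V) = Finset.range (Module.finrank ℝ V + 1) := by
          ext; simp
        rw [this]
        apply Finset.sum_le_sum
        intro k hk
        have hk : k ≤ Module.finrank ℝ V := by simpa [Nat.lt_succ_iff] using hk
        have := Nat.choose_le_pow (Fintype.card ι) k
        have h2 := Nat.choose_pos hk
        simp only [one_pow, mul_one]
        nlinarith
    _ = _ := (add_pow _ _ _).symm


noncomputable def dt {m : ℕ} (u : Fin m → (Fin (m + 1) → ℝ)) :
    Module.Dual ℝ (Fin (m + 1) → ℝ) :=
  ((Matrix.detRowAlternating (R := ℝ) (n := Fin (m + 1))).toMultilinearMap).toLinearMap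
    (Fin.cons 0 u) 0

lemma dt_apply {m : ℕ} (u : Fin m → (Fin (m + 1) → ℝ)) (y) :
    dt u y = Matrix.det (Matrix.of (Fin.cons y u : Fin (m + 1) → (Fin (m + 1) → ℝ))) := by
  simp [dt, Fin.update_cons_zero]
  rfl

lemma exists_dt {m : ℕ} {ι : Type} [Fintype ι] (v : ι → (Fin (m + 1) → ℝ))
    (p : Module.Dual ℝ (Fin (m + 1) → ℝ)) (hp0 : p ≠ 0)
    (hp : ∀ q : Module.Dual ℝ (Fin (m + 1) → ℝ), (∀ i, p (v i) = 0 → q (v i) = 0) →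
      ∃ t : ℝ, q = t • p) :
    ∃ (τ : Fin m → ι) (σ : SignType) (t : ℝ), 0 < t ∧ (σ : ℝ) • dt (v ∘ τ) = t • p := by
  classical
  set s : Set (Fin (m + 1) → ℝ) := v '' {i | p (v i) = 0} with hs
  set W := Submodule.span ℝ s with hW
  have hWp : W ≤ LinearMap.ker p := by
    rw [hW, Submodule.span_le]
    rintro _ ⟨i, hi, rfl⟩
    exact hi
  have hann : W.dualAnnihilator = Submodule.span ℝ {p} := by
    ext q
    rw [Submodule.mem_dualAnnihilator, Submodule.mem_span_singleton]
    constructor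
    · intro h
      obtain ⟨t, ht⟩ := hp q (fun i hi => h _ (Submodule.subset_span ⟨i, hi, rfl⟩))
      exact ⟨t, ht.symm⟩
    · rintro ⟨t, rfl⟩ y hy
      have : p y = 0 := hWp hy
      simp [this]
  have hfr : Module.finrank ℝ W = m := by
    have h1 := Subspace.finrank_add_finrank_dualAnnihilator_eq W
    rw [hann, finrank_span_singleton hp0] at h1
    simpa using h1
  obtain ⟨f, hfs, hfspan, hfli⟩ := Submodule.exists_fun_fin_finrank_span_eq ℝ s
  obtain ⟨f, hfs, hfspan, hfli⟩ : ∃ f : Fin m → (Fin (m + 1) → ℝ), (∀ i, f i ∈ s) ∧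
      Submodule.span ℝ (Set.range f) = W ∧ LinearIndependent ℝ f := by
    have := (⟨f, hfs, hfspan, hfli⟩ : ∃ f : Fin (Module.finrank ℝ W) → (Fin (m + 1) → ℝ),
      (∀ i, f i ∈ s) ∧ Submodule.span ℝ (Set.range f) = W ∧ LinearIndependent ℝ f)
    rwa [hfr] at this
  choose τ hτ hτf using hfs
  have hfe : v ∘ τ = f := funext hτf
  have hker : W ≤ LinearMap.ker (dt f) := by
    rw [← hfspan, Submodule.span_le]
    rintro _ ⟨k, rfl⟩
    rw [SetLike.mem_coe, LinearMap.mem_ker, dt_apply]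
    apply Matrix.det_zero_of_row_eq (i := 0) (j := k.succ) (Fin.succ_ne_zero k).symm
    rfl
  obtain ⟨t, ht⟩ := hp (dt f) (fun i hi => hker (Submodule.subset_span ⟨i, hi, rfl⟩))
  obtain ⟨z, hz⟩ : ∃ z, p z ≠ 0 := by
    by_contra! h
    exact hp0 (LinearMap.ext h)
  have hzW : z ∉ W := fun h => hz (hWp h)
  have hne : dt f z ≠ 0 := by
    have hli := LinearIndependent.finCons hfli (x := z) (by rwa [hfspan])
    rw [dt_apply]
    have := (Matrix.linearIndependent_rows_iff_isUnit
      (A := Matrix.of (Fin.cons z f : Fin (m + 1) → (Fin (m + 1) → ℝ)))).1 hli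
    exact ((Matrix.isUnit_iff_isUnit_det _).1 this).ne_zero
  have ht0 : t ≠ 0 := by
    rintro rfl
    apply hne; rw [ht]; simp
  refine ⟨τ, SignType.sign t, |t|, abs_pos.2 ht0, ?_⟩
  rw [hfe, ht, smul_smul, sign_mul_self]


lemma cover {m : ℕ} {ι : Type} [Fintype ι] [DecidableEq ι] (v : ι → (Fin (m + 1) → ℝ))
    (hv : Submodule.span ℝ (Set.range v) = ⊤) :
    ∃ Ps : Finset (Fin (m + 1) → Module.Dual ℝ (Fin (m + 1) → ℝ)),
      Ps.card ≤ (Fintype.card ι + 1) ^ (m + 1) * (2 * Fintype.card ι) ^ (m + 1) ∧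
      (∀ P ∈ Ps, (∃ (σ : Fin (m + 1) → SignType) (τ : Fin (m + 1) → Fin m → ι),
          ∀ a, P a = (σ a : ℝ) • dt (v ∘ τ a)) ∧
        ∀ i, ¬ ((∃ a, P a (v i) < 0) ∧ ∃ a, 0 < P a (v i))) ∧
      ∀ w, ∃ P ∈ Ps, Good w P := by
  classical
  have hne : Nonempty ι := by
    by_contra h
    rw [not_nonempty_iff] at h
    rw [Set.range_eq_empty, Submodule.span_empty] at hv
    exact bot_ne_top hv
  let sg : Finset ι → ι → ℝ := fun A i => if i ∈ A then 1 else -1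
  have hsg : ∀ A i, sg A i * sg A i = 1 := by
    intro A i; simp only [sg]; split_ifs <;> norm_num
  have hsg0 : ∀ A i, sg A i ≠ 0 := by
    intro A i h; have := hsg A i; simp [h] at this
  let u : Finset ι → ι → (Fin (m + 1) → ℝ) := fun A i => sg A i • v i
  have hu : ∀ A, Submodule.span ℝ (Set.range (u A)) = ⊤ := by
    intro A
    rw [eq_top_iff, ← hv, Submodule.span_le]
    rintro _ ⟨i, rfl⟩
    have : v i = sg A i • u A i := by simp only [u]; rw [smul_smul, hsg, one_smul]
    rw [SetLike.mem_coe, this]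
    exact Submodule.smul_mem _ _ (Submodule.subset_span ⟨i, rfl⟩)
  have hz : ∀ A i (p : Module.Dual ℝ (Fin (m + 1) → ℝ)), p (u A i) = 0 ↔ p (v i) = 0 := by
    intro A i p; simp [u, hsg0]
  let Ok : Finset ι → Finset ι → Module.Dual ℝ (Fin (m + 1) → ℝ) → Prop := fun A I p =>
    (∃ (τ : Fin m → ι) (σ : SignType), p = (σ : ℝ) • dt (v ∘ τ)) ∧ p ≠ 0 ∧
      (∀ i, 0 ≤ p (u A i)) ∧ ∀ i ∈ I, p (u A i) = 0
  let pch : Finset ι → Finset ι → Module.Dual ℝ (Fin (m + 1) → ℝ) := fun A I =>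
    if h : ∃ p, Ok A I p then h.choose else 0
  have hOk : ∀ A I, (∃ p, Ok A I p) → Ok A I (pch A I) := by
    intro A I h
    simp only [pch]
    rw [dif_pos h]
    exact h.choose_spec
  have hpch : ∀ A, ∀ I : Finset ι, (∃ w : Module.Dual ℝ (Fin (m + 1) → ℝ), w ≠ 0 ∧
      (∀ i, 0 ≤ w (u A i)) ∧ ∀ i ∈ I, w (u A i) = 0) →
      pch A I ≠ 0 ∧ (∀ i, 0 ≤ pch A I (u A i)) ∧ ∀ i ∈ I, pch A I (u A i) = 0 := by
    rintro A I ⟨w, hw0, hwK, hwI⟩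
    refine (hOk A I ?_).2
    obtain ⟨p, hp0, hpK, hpI, hpe⟩ := exists_extreme (u A) (hu A) I w hw0 hwK hwI
    obtain ⟨τ, σ, t, ht, hdt⟩ := exists_dt v p hp0 (fun q hq => hpe q (fun i hi =>
      (hz A i q).2 (hq i ((hz A i p).1 hi))))
    refine ⟨t • p, ⟨τ, σ, hdt.symm⟩, smul_ne_zero ht.ne' hp0, fun i => ?_, fun i hi => ?_⟩
    · exact mul_nonneg ht.le (hpK i)
    · simp [hpI i hi]
  let Q : Finset ι → Module.Dual ℝ (Fin (m + 1) → ℝ) → Prop := fun A p =>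
    (∃ (τ : Fin m → ι) (σ : SignType), p = (σ : ℝ) • dt (v ∘ τ)) ∧ (∀ i, 0 ≤ p (u A i))
  have hQ0 : ∀ A, Q A 0 := fun A =>
    ⟨⟨fun _ => Classical.arbitrary ι, 0, by simp⟩, by simp⟩
  have hQ : ∀ A I, Q A (pch A I) := by
    intro A I
    by_cases h : ∃ p, Ok A I p
    · exact ⟨(hOk A I h).1, (hOk A I h).2.2.1⟩
    · have : pch A I = 0 := by simp only [pch]; rw [dif_neg h]
      rw [this]; exact hQ0 A
  let 𝒜 : Finset (Finset ι) := Finset.univ.filter fun A =>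
    ∃ w : Module.Dual ℝ (Fin (m + 1) → ℝ), ∀ i, i ∈ A ↔ 0 ≤ w (v i)
  refine ⟨(𝒜 ×ˢ (Finset.univ : Finset (Fin (m + 1) → ι × Bool))).image
    (fun x => tup (pch x.1) (m + 1) ∅ x.2), ?_, ?_, ?_⟩
  · refine Finset.card_image_le.trans ?_
    rw [Finset.card_product]
    refine Nat.mul_le_mul ?_ ?_
    · have := card_patterns v 𝒜 (by intro A hA; simpa [𝒜] using hA)
      simpa using this
    · simp [mul_comm]
  · intro P hP
    obtain ⟨⟨A, c⟩, _, rfl⟩ := Finset.mem_image.1 hP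
    have hall := tup_mem (pch A) (Q A) (hQ0 A) (hQ A) (m + 1) ∅ c
    constructor
    · choose h1 h2 using hall
      choose τ σ h using h1
      exact ⟨σ, τ, h⟩
    · rintro i ⟨⟨a, ha⟩, ⟨b, hb⟩⟩
      have h1 := (hall a).2 i
      have h2 := (hall b).2 i
      simp only [u, map_smul, smul_eq_mul, sg] at h1 h2
      simp only at ha hb
      split_ifs at h1 h2 <;> linarith
  · intro w
    let A : Finset ι := Finset.univ.filter fun i => 0 ≤ w (v i)
    have hA : A ∈ 𝒜 := by
      simp only [𝒜, Finset.mem_filter, Finset.mem_univ, true_and]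
      exact ⟨w, by simp [A]⟩
    obtain ⟨c, hc⟩ := exists_code (u A) (hu A) (pch A) (hpch A) (m + 1) ∅ w (by
      intro i
      simp only [u, map_smul, smul_eq_mul, sg]
      by_cases h : 0 ≤ w (v i)
      · simp [A, h]
      · simp [A, h]; linarith) (by simp) (Or.inr (by simp))
    exact ⟨_, Finset.mem_image.2 ⟨(A, c), by simp [hA], rfl⟩, hc⟩

lemma arith (m : ℕ) (hm : 1 ≤ m) (ε : ℝ) (hε : 0 < ε) (hε1 : ε < 1) :
    ∃ n : ℕ, ((3 ^ (m + 1) * ((n + (m + 1)) ^ m) ^ (m + 1) : ℕ) : ℝ) *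
        (1 - ε) ^ (n - (m + 1) * m) < 1 ∧
      (((n + (m + 1) + 1) ^ (m + 1) * (2 * (n + (m + 1))) ^ (m + 1) : ℕ) : ℝ) ≤
        (64 * m / ε) ^ ((64 : ℝ) * m) := by
  obtain ⟨d, hd⟩ : ∃ d, d = m + 1 := ⟨_, rfl⟩
  obtain ⟨q, hq⟩ : ∃ q, q = ⌈1 / ε⌉₊ := ⟨_, rfl⟩
  have hq1 : 1 / ε ≤ q := hq ▸ Nat.le_ceil _
  have h1ε : 1 < 1 / ε := by rw [lt_div_iff₀ hε]; linarith
  have hq2 : (q : ℝ) ≤ 2 / ε := by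
    have : (q : ℝ) < 1 / ε + 1 := hq ▸ Nat.ceil_lt_add_one (by positivity)
    have h2 : 2 / ε = 1 / ε + 1 / ε := by ring
    linarith
  have hqε : 1 ≤ ε * q := by rw [div_le_iff₀ hε] at hq1; linarith
  have hq0 : 1 ≤ q := by
    have : (0 : ℝ) < q := by linarith
    exact_mod_cast this
  have hd2 : 2 ≤ d := by omega
  have hN : d * m + 16 * d ^ 4 * q ^ 2 + d ≤ 32 * d ^ 4 * q ^ 2 := by
    have h1 : d * m + d = d ^ 2 := by rw [hd]; ring
    have h2 : d ^ 2 ≤ d ^ 4 := Nat.pow_le_pow_right (by omega) (by norm_num)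
    have h3 : 1 ≤ q ^ 2 := Nat.one_le_pow _ _ hq0
    nlinarith
  refine ⟨d * m + 16 * d ^ 4 * q ^ 2, ?_, ?_⟩
  · rw [← hd]
    rw [Nat.add_sub_cancel_left]
    have hdR : (2 : ℝ) ≤ d := by exact_mod_cast hd2
    have hqR : (1 : ℝ) ≤ q := by exact_mod_cast hq0
    have hmR : (m : ℝ) = d - 1 := by rw [hd]; push_cast; ring
    have e1 : (1 - ε) ^ (16 * d ^ 4 * q ^ 2) ≤ Real.exp (-(16 * d ^ 4 * q)) := by
      calc (1 - ε) ^ (16 * d ^ 4 * q ^ 2) ≤ (Real.exp (-ε)) ^ (16 * d ^ 4 * q ^ 2) := by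
            apply pow_le_pow_left₀ (by linarith)
            linarith [Real.add_one_le_exp (-ε)]
        _ = Real.exp (-(16 * d ^ 4 * q * (ε * q))) := by
            rw [← Real.exp_nat_mul]; congr 1; push_cast; ring
        _ ≤ _ := by
            apply Real.exp_le_exp.2
            have : (0 : ℝ) ≤ 16 * d ^ 4 * q := by positivity
            nlinarith
    have e2 : ((d * m + 16 * d ^ 4 * q ^ 2 + d : ℕ) : ℝ) ≤ Real.exp (12 * d ^ 2 * q) := by
      calc ((d * m + 16 * d ^ 4 * q ^ 2 + d : ℕ) : ℝ) ≤ ((32 * d ^ 4 * q ^ 2 : ℕ) : ℝ) := by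
            exact_mod_cast hN
        _ ≤ (6 * d ^ 2 * q : ℝ) ^ 2 := by
            push_cast
            have : (0 : ℝ) ≤ d ^ 4 * q ^ 2 := by positivity
            nlinarith
        _ ≤ (Real.exp (6 * d ^ 2 * q)) ^ 2 := by
            apply pow_le_pow_left₀ (by positivity)
            linarith [Real.add_one_le_exp (6 * d ^ 2 * q : ℝ)]
        _ = _ := by rw [← Real.exp_nat_mul]; congr 1; push_cast; ring
    have e3 : (3 : ℝ) ^ d ≤ Real.exp (2 * d) := by
      calc (3 : ℝ) ^ d ≤ (Real.exp 2) ^ d := by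
            apply pow_le_pow_left₀ (by norm_num)
            linarith [Real.add_one_le_exp (2 : ℝ)]
        _ = _ := by rw [← Real.exp_nat_mul]; congr 1; ring
    rw [Nat.cast_mul, Nat.cast_pow, Nat.cast_pow, Nat.cast_pow]
    calc _ ≤ Real.exp (2 * d) * ((Real.exp (12 * d ^ 2 * q)) ^ m) ^ d *
          Real.exp (-(16 * d ^ 4 * q)) := by
          have h0 : (0 : ℝ) ≤ (1 - ε) ^ (16 * d ^ 4 * q ^ 2) := pow_nonneg (by linarith) _
          gcongr
          exact_mod_cast e3
      _ = Real.exp (2 * d + 12 * d ^ 3 * m * q - 16 * d ^ 4 * q) := by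
          rw [← Real.exp_nat_mul, ← Real.exp_nat_mul, ← Real.exp_add, ← Real.exp_add]
          congr 1; ring
      _ < 1 := by
          rw [Real.exp_lt_one_iff, hmR]
          have h3 : (1 : ℝ) ≤ d ^ 3 := one_le_pow₀ (by linarith)
          have h4 : (d : ℝ) ≤ d ^ 4 * q := by
            have : (d : ℝ) ^ 4 * q = d * (d ^ 3 * q) := by ring
            rw [this]
            have h6 : (1 : ℝ) ≤ d ^ 3 * q := one_le_mul_of_one_le_of_one_le h3 hqR
            nlinarith
          have h5 : (0 : ℝ) < d ^ 3 * q := by positivity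
          nlinarith
  · rw [← hd]
    set N := d * m + 16 * d ^ 4 * q ^ 2 + d with hNdef
    have hN1 : 1 ≤ N := by omega
    have hmR : (1 : ℝ) ≤ m := by exact_mod_cast hm
    have hdm : (d : ℝ) ≤ 2 * m := by rw [hd]; push_cast; linarith
    have hb : (1 : ℝ) ≤ 64 * m / ε := by
      rw [le_div_iff₀ hε]; linarith
    have hA : (2 * N : ℝ) ≤ (64 * m / ε) ^ 4 := by
      calc (2 * N : ℝ) ≤ ((8 * d ^ 2 * q : ℝ)) ^ 2 := by
            have : (N : ℝ) ≤ ((32 * d ^ 4 * q ^ 2 : ℕ) : ℝ) := by exact_mod_cast hN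
            push_cast at this
            nlinarith
        _ ≤ (8 * (2 * m) ^ 2 * (2 / ε)) ^ 2 := by gcongr
        _ = (64 * m * (m / ε)) ^ 2 := by ring
        _ ≤ ((64 * m / ε) ^ 2) ^ 2 := by
            apply pow_le_pow_left₀ (by positivity)
            have h1 : (64 * m / ε) ^ 2 = 64 * m * (m / ε) * (64 * (1 / ε)) := by ring
            rw [h1]
            have : (0 : ℝ) ≤ 64 * m * (m / ε) := by positivity
            nlinarith
        _ = _ := by ring
    calc (((N + 1) ^ d * (2 * N) ^ d : ℕ) : ℝ) ≤ (((2 * N) ^ d * (2 * N) ^ d : ℕ) : ℝ) := by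
          have : N + 1 ≤ 2 * N := by omega
          exact_mod_cast Nat.mul_le_mul_right _ (Nat.pow_le_pow_left this d)
      _ = (2 * N : ℝ) ^ (2 * d) := by push_cast; ring
      _ ≤ ((64 * m / ε) ^ 4) ^ (2 * d) := pow_le_pow_left₀ (by positivity) hA _
      _ = (64 * m / ε) ^ (8 * d) := by rw [← pow_mul]; congr 1; ring
      _ ≤ (64 * m / ε) ^ (64 * m) := pow_le_pow_right₀ hb (by omega)
      _ = _ := by rw [← Real.rpow_natCast]; push_cast; rfl


lemma measurable_dt {m : ℕ} {Y : Type} [MeasurableSpace Y] (u : Y → Fin m → (Fin (m + 1) → ℝ))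
    (w : Y → (Fin (m + 1) → ℝ)) (hu : ∀ k j, Measurable fun y => u y k j)
    (hw : ∀ j, Measurable fun y => w y j) : Measurable fun y => dt (u y) (w y) := by
  simp only [dt_apply, Matrix.det_apply]
  refine Finset.measurable_sum _ fun π _ => ?_
  refine Measurable.const_smul ?_ _
  refine Finset.measurable_prod _ fun i _ => ?_
  generalize π i = k
  refine Fin.cases ?_ (fun k => ?_) k
  · simpa using hw i
  · simpa using hu k i

/-- homogenized points -/
def homog {X : Type} {m : ℕ} (ψ : X → (Fin m → ℝ)) (x : X) : Fin (m + 1) → ℝ :=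
  Fin.cons 1 (ψ x)

def smp {X : Type} {m n : ℕ} (ψ : X → (Fin m → ℝ)) (x : Fin n → X) :
    Fin n ⊕ Fin (m + 1) → (Fin (m + 1) → ℝ) :=
  Sum.elim (fun i => homog ψ (x i)) (fun k => Pi.single k 1)

lemma measurable_homog {X : Type} [MeasurableSpace X] {m : ℕ} (ψ : X → (Fin m → ℝ))
    (hψ : Measurable ψ) (j : Fin (m + 1)) : Measurable fun x => homog ψ x j := by
  refine Fin.cases ?_ (fun k => ?_) j
  · simp [homog]
  · simp only [homog, Fin.cons_succ]
    exact (measurable_pi_apply k).comp hψ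

/-- **Theorem 5 (bracketing number of classes embeddable as halfspaces).**
There is a universal constant `c ≥ 1` such that any class `G` on `X` embeddable as
halfspaces in `m` dimensions (via a measurable map `ψ : X → ℝ^m`) admits, for every
probability measure `ν` on `X` and every `ε ∈ (0,1)`, an `ε`-bracketing with respect to
`ν` of size at most `(c m / ε) ^ (c m)`. -/
theorem bracketing_embeddable_halfspaces :
    ∃ c : ℝ, 1 ≤ c ∧
      ∀ (m : ℕ), 1 ≤ m →
      ∀ (X : Type) (_ : MeasurableSpace X),
      ∀ ψ : X → (Fin m → ℝ), Measurable ψ →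
      ∀ G : Set (X → ℝ),
        (∀ g ∈ G, ∃ (a : Fin m → ℝ) (b : ℝ),
          ∀ x, g x = if 0 ≤ (∑ i, a i * ψ x i) + b then (1 : ℝ) else 0) →
      ∀ ν : Measure X, IsProbabilityMeasure ν →
      ∀ ε : ℝ, ε ∈ Set.Ioo (0 : ℝ) 1 →
        ∃ B, IsBracketing ν ε G B ∧
          (B.card : ℝ) ≤ (c * m / ε) ^ (c * m) := by
  classical
  refine ⟨64, by norm_num, ?_⟩
  intro m hm X _ ψ hψ G hG ν hν ε hε
  obtain ⟨n, hn1, hn2⟩ := arith m hm ε hε.1 hε.2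
  let Θ := (Fin (m + 1) → SignType) × (Fin (m + 1) → Fin m → Fin n ⊕ Fin (m + 1))
  let F : Θ → Fin (m + 1) → (Fin n → X) × X → ℝ := fun θ a z =>
    (θ.1 a : ℝ) * dt (smp ψ z.1 ∘ θ.2 a) (homog ψ z.2)
  let D : Θ → Set ((Fin n → X) × X) := fun θ => {z | (∃ a, F θ a z < 0) ∧ ∃ a, 0 < F θ a z}
  let J : Θ → Finset (Fin n) := fun θ =>
    (Finset.univ : Finset (Fin (m + 1) × Fin m)).biUnion fun ak =>
      Sum.elim (fun i => {i}) (fun _ => ∅) (θ.2 ak.1 ak.2)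
  have hF : ∀ θ a, Measurable (F θ a) := by
    intro θ a
    refine Measurable.const_mul (measurable_dt _ _ ?_ ?_) _
    · intro k j
      simp only [Function.comp, smp]
      rcases θ.2 a k with i | k'
      · exact (measurable_homog ψ hψ j).comp ((measurable_pi_apply i).comp measurable_fst)
      · exact measurable_const
    · intro j
      exact (measurable_homog ψ hψ j).comp measurable_snd
  have hD : ∀ θ, MeasurableSet (D θ) := by
    intro θ
    have : D θ = (⋃ a, {z | F θ a z < 0}) ∩ ⋃ a, {z | 0 < F θ a z} := by
      ext z; simp [D]
    rw [this]
    exact (MeasurableSet.iUnion fun a => measurableSet_lt (hF θ a) measurable_const).inter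
      (MeasurableSet.iUnion fun a => measurableSet_lt measurable_const (hF θ a))
  have hJ : ∀ θ, (J θ).card ≤ (m + 1) * m := by
    intro θ
    have := Finset.card_biUnion_le_card_mul (Finset.univ : Finset (Fin (m + 1) × Fin m))
      (fun ak => (Sum.elim (fun i => {i}) (fun _ => ∅) (θ.2 ak.1 ak.2) : Finset (Fin n))) 1 (by
        intro ak _
        rcases θ.2 ak.1 ak.2 with i | k <;> simp)
    simpa using this
  have hdep : ∀ θ, ∀ x x' : Fin n → X, (∀ i ∈ J θ, x i = x' i) →
      ∀ y, (x, y) ∈ D θ ↔ (x', y) ∈ D θ := by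
    intro θ x x' h y
    have hs : ∀ a, smp ψ x ∘ θ.2 a = smp ψ x' ∘ θ.2 a := by
      intro a
      funext k
      simp only [Function.comp, smp]
      rcases hk : θ.2 a k with i | k'
      · have : i ∈ J θ := by
          simp only [J, Finset.mem_biUnion, Finset.mem_univ, true_and]
          exact ⟨(a, k), by simp [hk]⟩
        simp [h i this]
      · rfl
    simp only [D, F, Set.mem_ofPred_eq, hs]
  obtain ⟨x, hx⟩ := net ν n J ((m + 1) * m) hJ D hD hdep ε hε.1 hε.2 (by
    refine lt_of_eq_of_lt ?_ hn1
    congr 2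
    simp [Θ, Fintype.card_prod]
    rfl)
  have hspan : Submodule.span ℝ (Set.range (smp ψ x)) = ⊤ := by
    rw [eq_top_iff, ← (Pi.basisFun ℝ (Fin (m + 1))).span_eq, Submodule.span_le]
    rintro _ ⟨k, rfl⟩
    exact Submodule.subset_span ⟨Sum.inr k, by simp [smp]⟩
  obtain ⟨Ps, hcard, hPs, hcov⟩ := cover (smp ψ x) hspan
  let L : (Fin (m + 1) → Module.Dual ℝ (Fin (m + 1) → ℝ)) → Set X := fun P =>
    {y | ∀ a, 0 ≤ P a (homog ψ y)}
  let U : (Fin (m + 1) → Module.Dual ℝ (Fin (m + 1) → ℝ)) → Set X := fun P =>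
    {y | (∀ a, P a (homog ψ y) ≤ 0) ∧ ∃ a, P a (homog ψ y) < 0}ᶜ
  have hPm : ∀ p : Module.Dual ℝ (Fin (m + 1) → ℝ), Measurable fun y => p (homog ψ y) := by
    intro p
    exact (LinearMap.continuous_of_finiteDimensional p).measurable.comp
      (measurable_pi_lambda _ (measurable_homog ψ hψ))
  have hLm : ∀ P, MeasurableSet (L P) := by
    intro P
    have : L P = ⋂ a, {y | 0 ≤ P a (homog ψ y)} := by ext; simp [L]
    rw [this]
    exact MeasurableSet.iInter fun a => measurableSet_le measurable_const (hPm _)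
  have hUm : ∀ P, MeasurableSet (U P) := by
    intro P
    have : U P = ((⋂ a, {y | P a (homog ψ y) ≤ 0}) ∩ ⋃ a, {y | P a (homog ψ y) < 0})ᶜ := by
      ext; simp [U]
    rw [this]
    exact ((MeasurableSet.iInter fun a => measurableSet_le (hPm _) measurable_const).inter
      (MeasurableSet.iUnion fun a => measurableSet_lt (hPm _) measurable_const)).compl
  have hLU : ∀ P, L P ⊆ U P := by
    rintro P y hy ⟨_, a, ha⟩
    exact absurd (hy a) (not_le.2 ha)
  refine ⟨Ps.image fun P => ((L P).indicator 1, (U P).indicator 1), ⟨?_, ?_⟩, ?_⟩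
  · intro lu hlu
    obtain ⟨P, hP, rfl⟩ := Finset.mem_image.1 hlu
    refine ⟨measurable_one.indicator (hLm P), measurable_one.indicator (hUm P), ?_, ?_, ?_, ?_⟩
    · intro y; by_cases h : y ∈ L P <;> simp [h]
    · intro y; by_cases h : y ∈ U P <;> simp [h]
    · intro y
      exact Set.indicator_le_indicator_of_subset (hLU P) (fun _ => zero_le_one) y
    · obtain ⟨⟨σ, τ, hστ⟩, hno⟩ := hPs P hP
      have hFP : ∀ a y, F (σ, τ) a (x, y) = P a (homog ψ y) := by
        intro a y; simp [F, hστ]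
      refine le_trans (measure_mono ?_) (hx (σ, τ) ?_)
      · intro y hy
        simp only [Set.mem_ofPred_eq] at hy
        have hyL : y ∉ L P := by
          intro h
          exact hy (by rw [Set.indicator_of_mem h, Set.indicator_of_mem (hLU P h)])
        have hyU : y ∈ U P := by
          by_contra h
          exact hy (by rw [Set.indicator_of_notMem h, Set.indicator_of_notMem hyL])
        simp only [L, Set.mem_ofPred_eq, not_forall, not_le] at hyL
        simp only [D, Set.mem_ofPred_eq, hFP]
        refine ⟨hyL, ?_⟩
        by_contra! hcon
        exact hyU ⟨hcon, hyL⟩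
      · intro i hi
        simp only [D, Set.mem_ofPred_eq, hFP] at hi
        exact hno (Sum.inl i) hi
  · intro g hg
    obtain ⟨a, b, hab⟩ := hG g hg
    let w : Module.Dual ℝ (Fin (m + 1) → ℝ) :=
      ∑ i, (Fin.cons b a : Fin (m + 1) → ℝ) i • LinearMap.proj i
    have hw : ∀ y, w (homog ψ y) = (∑ i, a i * ψ y i) + b := by
      intro y
      simp [w, homog, Fin.sum_univ_succ, add_comm]
    obtain ⟨P, hP, hgood⟩ := hcov w
    refine ⟨_, Finset.mem_image_of_mem _ hP, fun y => ?_, fun y => ?_⟩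
    · rw [hab, ← hw]
      by_cases h : y ∈ L P
      · have := (hgood (homog ψ y)).1 h
        simp [this, Set.indicator_of_mem h]
      · simp only [Set.indicator_of_notMem h]
        split_ifs <;> norm_num
    · rw [hab, ← hw]
      by_cases h : y ∈ U P
      · simp only [Set.indicator_of_mem h, Pi.one_apply]
        split_ifs <;> norm_num
      · have h' : (∀ a, P a (homog ψ y) ≤ 0) ∧ ∃ a, P a (homog ψ y) < 0 := by
          exact not_not.1 h
        have := (hgood (homog ψ y)).2.2 h'.1 h'.2
        simp [not_le.2 this, Set.indicator_of_notMem h]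
  · refine le_trans ?_ hn2
    have h1 : (Ps.image fun P => ((L P).indicator (1 : X → ℝ), (U P).indicator (1 : X → ℝ))).card
        ≤ Ps.card := Finset.card_image_le
    have h2 := h1.trans hcard
    simp only [Fintype.card_sum, Fintype.card_fin] at h2
    exact_mod_cast h2
end

section
/- Let X be a finite nonempty set, let P and D be probability mass functions on X with D(x) > 0 for all x, let q : X → [0,1], and let m ∈ [0,1]. For a probability mass function R on X, write q(R) = Σ_x q(x) R(x), and let D' be the probability mass function defined by D'(x) = D(x) · exp( q(x) (m − q(D)) / 2 ) / Z, where Z = Σ_y D(y) · exp( q(y) (m − q(D)) / 2 ). Then D_KL(P‖D) − D_KL(P‖D') ≥ ((q(D) − q(P))/2)² − ((m − q(P))/2)². -/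
/-- **Lemma D.3 (potential decrease for the multiplicative weights update;
Lemma A.4 of Hardt–Ligett–McSherry).**
One multiplicative-weights update with query `q : X → [0,1]` and noisy answer `m ∈ [0,1]`
decreases the KL potential `D_KL(P‖·)` by at least the squared error of `q` minus the
squared noise: `D_KL(P‖D) − D_KL(P‖D') ≥ ((q(D) − q(P))/2)² − ((m − q(P))/2)²`. -/
theorem mw_potential_decrease
    {X : Type*} [Fintype X] [Nonempty X]
    (P D : X → ℝ) (hP0 : ∀ x, 0 ≤ P x) (hPsum : ∑ x, P x = 1)
    (hD0 : ∀ x, 0 < D x) (hDsum : ∑ x, D x = 1)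
    (q : X → ℝ) (hq : ∀ x, q x ∈ Set.Icc (0 : ℝ) 1)
    (m : ℝ) (hm : m ∈ Set.Icc (0 : ℝ) 1)
    (D' : X → ℝ)
    (hD' : ∀ x, D' x = D x * Real.exp (q x * (m - ∑ y, q y * D y) / 2) /
        (∑ y, D y * Real.exp (q y * (m - ∑ z, q z * D z) / 2))) :
    (∑ x, P x * Real.log (P x / D x)) - (∑ x, P x * Real.log (P x / D' x))
      ≥ ((∑ x, q x * D x - ∑ x, q x * P x) / 2) ^ 2
        - ((m - ∑ x, q x * P x) / 2) ^ 2 := by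
  obtain ⟨hm0, hm1⟩ := hm
  have ha0 : 0 ≤ ∑ y, q y * D y :=
    Finset.sum_nonneg fun x _ => mul_nonneg (hq x).1 (hD0 x).le
  have ha1 : ∑ y, q y * D y ≤ 1 := by
    rw [← hDsum]
    exact Finset.sum_le_sum fun x _ => mul_le_of_le_one_left (hD0 x).le (hq x).2
  set a := ∑ y, q y * D y with ha
  set b := ∑ x, q x * P x with hb
  set Z := ∑ y, D y * Real.exp (q y * (m - a) / 2) with hZ
  have hZpos : 0 < Z :=
    Finset.sum_pos (fun x _ => mul_pos (hD0 x) (Real.exp_pos _)) Finset.univ_nonempty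
  have hZle : Z ≤ 1 + a * ((m - a) / 2) + ((m - a) / 2) ^ 2 := by
    have h1 : Z ≤ ∑ x, (D x + q x * D x * ((m - a) / 2) + D x * ((m - a) / 2) ^ 2) := by
      refine Finset.sum_le_sum fun x _ => ?_
      obtain ⟨h0, h1⟩ := hq x
      have hab : |q x * (m - a) / 2| ≤ 1 := by
        rw [abs_le]; constructor <;> nlinarith
      have h2 := (abs_le.mp (Real.abs_exp_sub_one_sub_id_le hab)).2
      have h3 : (q x * (m - a) / 2) ^ 2 ≤ ((m - a) / 2) ^ 2 := by
        have : (q x) ^ 2 ≤ 1 := by nlinarith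
        nlinarith [mul_le_mul_of_nonneg_right this (sq_nonneg ((m - a) / 2))]
      have h4 : Real.exp (q x * (m - a) / 2) ≤
          1 + q x * (m - a) / 2 + ((m - a) / 2) ^ 2 := by linarith
      have h5 := mul_le_mul_of_nonneg_left h4 (hD0 x).le
      linarith
    rw [Finset.sum_add_distrib, Finset.sum_add_distrib, ← Finset.sum_mul, ← Finset.sum_mul,
      hDsum, ← ha] at h1
    linarith
  have hlog : Real.log Z ≤ a * ((m - a) / 2) + ((m - a) / 2) ^ 2 := by
    have := Real.log_le_sub_one_of_pos hZpos
    linarith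
  have key : (∑ x, P x * Real.log (P x / D x)) - (∑ x, P x * Real.log (P x / D' x))
      = b * ((m - a) / 2) - Real.log Z := by
    have h : ∀ x, P x * Real.log (P x / D x) - P x * Real.log (P x / D' x)
        = q x * P x * ((m - a) / 2) - P x * Real.log Z := by
      intro x
      rcases eq_or_ne (P x) 0 with h0 | h0
      · simp [h0]
      · have hd := (hD0 x).ne'
        have he := (Real.exp_pos (q x * (m - a) / 2)).ne'
        have hd' : D' x ≠ 0 := by
          rw [hD' x]; exact div_ne_zero (mul_ne_zero hd he) hZpos.ne'
        rw [Real.log_div h0 hd, Real.log_div h0 hd', hD' x,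
          Real.log_div (mul_ne_zero hd he) hZpos.ne', Real.log_mul hd he, Real.log_exp]
        ring
    rw [← Finset.sum_sub_distrib, Finset.sum_congr rfl fun x _ => h x,
      Finset.sum_sub_distrib, ← Finset.sum_mul, ← Finset.sum_mul, hPsum, ← hb, one_mul]
  rw [key]
  nlinarith
end

section
/- Let T ≥ 2 be an integer, let Ω = (−1/4, 1/4)^T equipped with the product P of T copies of the uniform probability measure on the interval (−1/4, 1/4), and write η = (η_1, …, η_T) ∈ Ω. Define x_1(η) = 1/2 and, for 2 ≤ t ≤ T, x_t(η) = 1/4 if η_1 ≤ 0 and x_t(η) = 3/4 otherwise. Let S(η) = Σ_{t=1}^T 1( x_t(η) + η_t ≥ 1/2 ). Then P(S = T) = 1/2 and P(S = 0) = 1/2; in particular E[S/T] = 1/2 while S/T ∈ {0, 1} almost surely, so the empirical average of the threshold g_{1/2}(z) = 1(z ≥ 1/2) over the adaptive smoothed sequence does not concentrate around its mean for any T. -/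
open MeasureTheory
open scoped ENNReal

/-- **Appendix B example: lack of uniform convergence over adaptive sequences.**
With `η = (η_1, …, η_T)` i.i.d. uniform on `(−1/4, 1/4)`, the adversary sets `x_1 = 1/2`
and `x_t = 1/4` if `η_1 ≤ 0`, `x_t = 3/4` otherwise (for `t ≥ 2`). Then the count
`S(η) = Σ_t 1(x_t + η_t ≥ 1/2)` equals `T` with probability `1/2` and `0` with
probability `1/2`; in particular `E[S/T] = 1/2` while `S/T ∈ {0,1}` almost surely. -/
theorem no_uniform_convergence_adaptive
    (T : ℕ) (hT : 2 ≤ T)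
    (P : Measure (Fin T → ℝ))
    (hP : P = Measure.pi fun _ =>
      (2 : ℝ≥0∞) • volume.restrict (Set.Ioo (-(1 / 4) : ℝ) (1 / 4)))
    (x : (Fin T → ℝ) → Fin T → ℝ)
    (hx : ∀ η t, x η t =
      if (t : ℕ) = 0 then 1 / 2
      else (if η ⟨0, by omega⟩ ≤ 0 then 1 / 4 else 3 / 4))
    (S : (Fin T → ℝ) → ℝ)
    (hS : ∀ η, S η = ∑ t, if (1 / 2 : ℝ) ≤ x η t + η t then 1 else 0) :
    P {η | S η = T} = 1 / 2 ∧ P {η | S η = 0} = 1 / 2 ∧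
      (∫ η, S η / T ∂P) = 1 / 2 ∧
      (∀ᵐ η ∂P, S η / T = 0 ∨ S η / T = 1) := by
  have hT0 : (T : ℝ) ≠ 0 := by
    have : T ≠ 0 := by omega
    exact_mod_cast this
  set ν : Measure ℝ := (2 : ℝ≥0∞) • volume.restrict (Set.Ioo (-(1 / 4) : ℝ) (1 / 4)) with hν
  have h24 : (2 : ℝ≥0∞) * ENNReal.ofReal (1 / 4) = 1 / 2 := by
    rw [show (2 : ℝ≥0∞) = ENNReal.ofReal 2 by simp, ← ENNReal.ofReal_mul (by norm_num),
      show (1 : ℝ≥0∞) = ENNReal.ofReal 1 by simp, ← ENNReal.ofReal_div_of_pos (by norm_num)]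
    norm_num
  have hprob : IsProbabilityMeasure ν := by
    constructor
    rw [hν, Measure.smul_apply, Measure.restrict_apply MeasurableSet.univ, Set.univ_inter,
      Real.volume_Ioo, smul_eq_mul,
      show (2 : ℝ≥0∞) = ENNReal.ofReal 2 by simp, ← ENNReal.ofReal_mul (by norm_num)]
    norm_num
  have hpos : ν (Set.Ioi 0) = 1 / 2 := by
    rw [hν, Measure.smul_apply, Measure.restrict_apply measurableSet_Ioi, Set.Ioi_inter_Ioo,
      Real.volume_Ioo, smul_eq_mul, ← h24]
    norm_num
  have hneg : ν (Set.Iic 0) = 1 / 2 := by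
    have h : Set.Iic (0 : ℝ) ∩ Set.Ioo (-(1 / 4) : ℝ) (1 / 4) = Set.Ioc (-(1/4)) 0 := by
      ext y
      simp only [Set.mem_inter_iff, Set.mem_Iic, Set.mem_Ioo, Set.mem_Ioc]
      constructor
      · rintro ⟨a, b, c⟩
        exact ⟨b, a⟩
      · rintro ⟨a, b⟩
        exact ⟨b, a, by linarith⟩
    rw [hν, Measure.smul_apply, Measure.restrict_apply measurableSet_Iic, h,
      Real.volume_Ioc, smul_eq_mul, ← h24]
    norm_num
  have haeIoo : ∀ᵐ y ∂ν, y ∈ Set.Ioo (-(1 / 4) : ℝ) (1 / 4) :=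
    Measure.ae_smul_measure (ae_restrict_mem measurableSet_Ioo) _
  have hae0 : ∀ᵐ y ∂ν, y ≠ 0 :=
    Measure.ae_smul_measure (ae_restrict_of_ae (Measure.ae_ne volume 0)) _
  have hmp : ∀ t : Fin T, MeasurePreserving (fun η : Fin T → ℝ => η t) P ν := by
    intro t
    rw [hP]
    exact measurePreserving_eval (fun _ : Fin T => ν) t
  have hPp : IsProbabilityMeasure P := by
    rw [hP]; infer_instance
  set z : Fin T := ⟨0, by omega⟩ with hz
  have hA : P {η | 0 < η z} = 1 / 2 := by
    rw [← hpos]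
    exact (hmp z).measure_preimage measurableSet_Ioi.nullMeasurableSet
  have hB : P {η | η z ≤ 0} = 1 / 2 := by
    rw [← hneg]
    exact (hmp z).measure_preimage measurableSet_Iic.nullMeasurableSet
  have hall : ∀ᵐ η ∂P, ∀ t, η t ∈ Set.Ioo (-(1 / 4) : ℝ) (1 / 4) :=
    ae_all_iff.2 fun t => (hmp t).quasiMeasurePreserving.ae haeIoo
  have hz0 : ∀ᵐ η ∂P, η z ≠ 0 := (hmp z).quasiMeasurePreserving.ae hae0
  have key : ∀ᵐ η ∂P, (0 < η z ∧ S η = T) ∨ (η z ≤ 0 ∧ S η = 0) := by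
    filter_upwards [hall, hz0] with η h1 h2
    rcases lt_or_gt_of_ne h2 with h | h
    · right
      refine ⟨h.le, ?_⟩
      rw [hS]
      refine Finset.sum_eq_zero fun t _ => if_neg ?_
      rw [hx, if_pos h.le]
      split_ifs with h0
      · have : t = z := Fin.ext h0
        rw [this]; linarith
      · linarith [(h1 t).2]
    · left
      refine ⟨h, ?_⟩
      rw [hS]
      rw [Finset.sum_congr rfl (g := fun _ => (1 : ℝ))]
      · simp
      · intro t _
        refine if_pos ?_
        rw [hx, if_neg (not_le.2 h)]
        split_ifs with h0
        · have : t = z := Fin.ext h0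
          rw [this]; linarith
        · linarith [(h1 t).1]
  refine ⟨?_, ?_, ?_, ?_⟩
  · rw [← hA]
    refine measure_congr ?_
    filter_upwards [key] with η h
    refine propext (?_ : S η = T ↔ 0 < η z)
    rcases h with ⟨a, b⟩ | ⟨a, b⟩
    · simp [a, b]
    · simp [b, hT0.symm, not_lt.2 a]
  · rw [← hB]
    refine measure_congr ?_
    filter_upwards [key] with η h
    refine propext (?_ : S η = 0 ↔ η z ≤ 0)
    rcases h with ⟨a, b⟩ | ⟨a, b⟩
    · rw [b]; exact ⟨fun h => absurd h hT0, fun h => absurd a (not_lt.2 h)⟩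
    · simp [a, b]
  · have hm : MeasurableSet {η : Fin T → ℝ | 0 < η z} :=
      measurableSet_lt measurable_const (measurable_pi_apply z)
    have : (fun η => S η / T) =ᵐ[P] Set.indicator {η | 0 < η z} 1 := by
      filter_upwards [key] with η h
      rcases h with ⟨a, b⟩ | ⟨a, b⟩
      · simp [a, b, hT0]
      · simp [b, not_lt.2 a]
    rw [integral_congr_ae this, integral_indicator_one hm, Measure.real, hA]
    simp
  · filter_upwards [key] with η h
    rcases h with ⟨a, b⟩ | ⟨a, b⟩
    · right; rw [b]; exact div_self hT0
    · left; rw [b]; simp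
end
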